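/- arXiv:2601.02274 — 5 statements merged into one kernel-verified Lean document; each statement's English description precedes it below -/
import Mathlib

section
/- Let h > 0, let φ ∈ C^∞(ℝ², ℝ), and let W ∈ C¹(ℝ², ℝ) be bounded with M := sup_{x ∈ ℝ²} |∇W(x) · ∇φ(x)| < ∞. For u ∈ C_c^∞(ℝ², ℂ) define P u := e^{φ/h}(−h²Δ + W)(e^{−φ/h} u), A u := e^{φ/h}(−h²Δ)(e^{−φ/h} u), and A* u := e^{−φ/h}(−h²Δ)(e^{φ/h} u). Then (1/h) ∫_{ℝ²} |P u|² ≥ (1/h) Re ∫_{ℝ²} (A*(A u) − A(A* u)) · conj(u) − 4M ∫_{ℝ²} |u|². -/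
open MeasureTheory Metric Set

noncomputable section

abbrev E2 := EuclideanSpace ℝ (Fin 2)

/-- The `i`-th standard basis vector of ℝ². -/
def basis2 (i : Fin 2) : E2 := EuclideanSpace.single i (1 : ℝ)

/-- Laplacian of a complex-valued function on ℝ². -/
def lapC (u : E2 → ℂ) (x : E2) : ℂ :=
  ∑ i, fderiv ℝ (fun y => fderiv ℝ u y (basis2 i)) x (basis2 i)

/-- The conjugated Schrödinger operator `P u = e^{φ/h}(−h²Δ + W)(e^{−φ/h} u)`. -/
def opP (h : ℝ) (φ : E2 → ℝ) (W : E2 → ℝ) (u : E2 → ℂ) (x : E2) : ℂ :=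
  (Real.exp (φ x / h) : ℂ) *
    (-(h ^ 2 : ℂ) * lapC (fun y => (Real.exp (-φ y / h) : ℂ) * u y) x +
      (W x : ℂ) * ((Real.exp (-φ x / h) : ℂ) * u x))

/-- The conjugated free Laplacian `A u = e^{φ/h}(−h²Δ)(e^{−φ/h} u)`. -/
def opA (h : ℝ) (φ : E2 → ℝ) (u : E2 → ℂ) (x : E2) : ℂ :=
  (Real.exp (φ x / h) : ℂ) *
    (-(h ^ 2 : ℂ) * lapC (fun y => (Real.exp (-φ y / h) : ℂ) * u y) x)

/-- Its formal adjoint `A* u = e^{−φ/h}(−h²Δ)(e^{φ/h} u)`. -/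
def opAstar (h : ℝ) (φ : E2 → ℝ) (u : E2 → ℂ) (x : E2) : ℂ :=
  (Real.exp (-φ x / h) : ℂ) *
    (-(h ^ 2 : ℂ) * lapC (fun y => (Real.exp (φ y / h) : ℂ) * u y) x)

lemma sm_D {F : Type*} [NormedAddCommGroup F] [NormedSpace ℝ F] {f : E2 → F}
    (hf : ContDiff ℝ (⊤ : ℕ∞) f) (v : E2) :
    ContDiff ℝ (⊤ : ℕ∞) (fun y => fderiv ℝ f y v) :=
  (hf.fderiv_right (m := (⊤ : ℕ∞)) (by simp)).clm_apply contDiff_const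

lemma cs_D {F : Type*} [NormedAddCommGroup F] [NormedSpace ℝ F] {f : E2 → F}
    (hf : HasCompactSupport f) (v : E2) :
    HasCompactSupport (fun y => fderiv ℝ f y v) := hf.fderiv_apply ℝ v

lemma df {F : Type*} [NormedAddCommGroup F] [NormedSpace ℝ F] {f : E2 → F}
    (hf : ContDiff ℝ (⊤ : ℕ∞) f) : Differentiable ℝ f := hf.differentiable (by simp)

lemma int_cs {F : Type*} [NormedAddCommGroup F] {f : E2 → F}
    (hf : Continuous f) (hc : HasCompactSupport f) : Integrable f :=
  hf.integrable_of_hasCompactSupport hc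

lemma ibp {𝕜 : Type*} [NormedField 𝕜] [NormedAlgebra ℝ 𝕜] {f g : E2 → 𝕜}
    (hf : ContDiff ℝ 1 f) (hg : ContDiff ℝ 1 g) (hc : HasCompactSupport g) (v : E2) :
    ∫ x, f x * fderiv ℝ g x v = - ∫ x, fderiv ℝ f x v * g x := by
  have h1 : Continuous (fun x => fderiv ℝ f x v) :=
    (hf.continuous_fderiv (by simp)).clm_apply continuous_const
  have h2 : Continuous (fun x => fderiv ℝ g x v) :=
    (hg.continuous_fderiv (by simp)).clm_apply continuous_const
  apply integral_mul_fderiv_eq_neg_fderiv_mul_of_integrable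
  · exact int_cs (h1.mul hg.continuous) (hc.mul_left)
  · exact int_cs (hf.continuous.mul h2) (HasCompactSupport.mul_left (cs_D hc v))
  · exact int_cs (hf.continuous.mul hg.continuous) (hc.mul_left)
  · intro x _; exact (hf.differentiable (by simp)) x
  · intro x _; exact (hg.differentiable (by simp)) x

lemma sm1 {F : Type*} [NormedAddCommGroup F] [NormedSpace ℝ F] {f : E2 → F}
    (hf : ContDiff ℝ (⊤ : ℕ∞) f) : ContDiff ℝ 1 f := hf.of_le (by exact_mod_cast le_top)

lemma sm_lap {f : E2 → ℂ} (hf : ContDiff ℝ (⊤ : ℕ∞) f) : ContDiff ℝ (⊤ : ℕ∞) (lapC f) := by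
  unfold lapC
  exact ContDiff.sum fun i _ => sm_D (sm_D hf _) _

lemma cs_lap {f : E2 → ℂ} (hf : HasCompactSupport f) : HasCompactSupport (lapC f) := by
  have : lapC f = (fun y => fderiv ℝ (fun y => fderiv ℝ f y (basis2 0)) y (basis2 0)) +
      (fun y => fderiv ℝ (fun y => fderiv ℝ f y (basis2 1)) y (basis2 1)) := by
    funext x; simp [lapC, Fin.sum_univ_two]
  rw [this]
  exact (cs_D (cs_D hf _) _).add (cs_D (cs_D hf _) _)

lemma lap_symm {f g : E2 → ℂ} (hf : ContDiff ℝ (⊤ : ℕ∞) f) (hg : ContDiff ℝ (⊤ : ℕ∞) g)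
    (hcf : HasCompactSupport f) (hc : HasCompactSupport g) :
    ∫ x, lapC f x * g x = ∫ x, f x * lapC g x := by
  simp only [lapC, Finset.sum_mul, Finset.mul_sum]
  rw [integral_finsetSum, integral_finsetSum]
  · refine Finset.sum_congr rfl fun i _ => ?_
    rw [ibp (sm1 hf) (sm1 (sm_D hg _)) (cs_D hc _)]
    have := ibp (sm1 (sm_D hf (basis2 i))) (sm1 hg) hc (basis2 i)
    rw [this, neg_neg]
  · intro i _
    exact int_cs (hf.continuous.mul (sm_D (sm_D hg _) _).continuous) (hcf.mul_right)
  · intro i _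
    exact int_cs ((sm_D (sm_D hf _) _).continuous.mul hg.continuous) (hc.mul_left)

lemma fderiv_conj {f : E2 → ℂ} (x v : E2) :
    fderiv ℝ (fun y => (starRingEnd ℂ) (f y)) x v = (starRingEnd ℂ) (fderiv ℝ f x v) := by
  have := Complex.conjCLE.comp_fderiv (f := f) (x := x)
  have h2 : (fun y => (starRingEnd ℂ) (f y)) = Complex.conjCLE ∘ f := by
    funext y; simp
  rw [h2, this]; simp

lemma lap_conj {f : E2 → ℂ} (x : E2) :
    lapC (fun y => (starRingEnd ℂ) (f y)) x = (starRingEnd ℂ) (lapC f x) := by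
  simp only [lapC, map_sum, fderiv_conj]

lemma sm_conj {f : E2 → ℂ} (hf : ContDiff ℝ (⊤ : ℕ∞) f) :
    ContDiff ℝ (⊤ : ℕ∞) (fun y => (starRingEnd ℂ) (f y)) :=
  Complex.conjCLE.contDiff.comp hf

lemma cs_conj {f : E2 → ℂ} (hf : HasCompactSupport f) :
    HasCompactSupport (fun y => (starRingEnd ℂ) (f y)) :=
  hf.comp_left (g := starRingEnd ℂ) (by simp)

lemma sm_exp {ψ : E2 → ℝ} (hψ : ContDiff ℝ (⊤ : ℕ∞) ψ) :
    ContDiff ℝ (⊤ : ℕ∞) (fun y => (Real.exp (ψ y) : ℂ)) :=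
  Complex.ofRealCLM.contDiff.comp (Real.contDiff_exp.comp hψ)

lemma star_eq (h : ℝ) (φ : E2 → ℝ) (u : E2 → ℂ) :
    opAstar h φ u = opA h (fun y => - φ y) u := by
  funext x; simp only [opAstar, opA, neg_neg]

lemma sm_A {h : ℝ} {φ : E2 → ℝ} {u : E2 → ℂ} (hφ : ContDiff ℝ (⊤ : ℕ∞) φ)
    (hu : ContDiff ℝ (⊤ : ℕ∞) u) : ContDiff ℝ (⊤ : ℕ∞) (opA h φ u) := by
  unfold opA
  exact (sm_exp (hφ.div_const h)).mul
    (contDiff_const.mul (sm_lap ((sm_exp (hφ.neg.div_const h)).mul hu)))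

lemma cs_A {h : ℝ} {φ : E2 → ℝ} {u : E2 → ℂ} 
    (hu : HasCompactSupport u) : HasCompactSupport (opA h φ u) := by
  unfold opA
  exact HasCompactSupport.mul_left (HasCompactSupport.mul_left (cs_lap (HasCompactSupport.mul_left hu)))

lemma adj {h : ℝ} {φ : E2 → ℝ} {u v : E2 → ℂ} (hφ : ContDiff ℝ (⊤ : ℕ∞) φ)
    (hu : ContDiff ℝ (⊤ : ℕ∞) u) (hcu : HasCompactSupport u)
    (hv : ContDiff ℝ (⊤ : ℕ∞) v) (hcv : HasCompactSupport v) :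
    ∫ x, opA h φ v x * (starRingEnd ℂ) (u x) =
      ∫ x, v x * (starRingEnd ℂ) (opAstar h φ u x) := by
  have key := lap_symm (f := fun y => (Real.exp (-φ y / h) : ℂ) * v y)
    (g := fun y => (starRingEnd ℂ) ((Real.exp (φ y / h) : ℂ) * u y))
    ((sm_exp (hφ.neg.div_const h)).mul hv) (sm_conj ((sm_exp (hφ.div_const h)).mul hu))
    (HasCompactSupport.mul_left hcv) (cs_conj (HasCompactSupport.mul_left hcu))
  have e1 : ∀ x, opA h φ v x * (starRingEnd ℂ) (u x) = (-(h^2 : ℂ)) *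
    (lapC (fun y => (Real.exp (-φ y / h) : ℂ) * v y) x *
      (starRingEnd ℂ) ((Real.exp (φ x / h) : ℂ) * u x)) := by
    intro x; simp only [opA, map_mul, Complex.conj_ofReal]; ring
  have e2 : ∀ x, v x * (starRingEnd ℂ) (opAstar h φ u x) = (-(h^2 : ℂ)) *
    ((Real.exp (-φ x / h) : ℂ) * v x *
     lapC (fun y => (starRingEnd ℂ) ((Real.exp (φ y / h) : ℂ) * u y)) x) := by
    intro x
    rw [lap_conj]
    simp only [opAstar, map_mul, map_neg, map_pow, Complex.conj_ofReal]; ring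
  simp only [e1, e2]
  rw [integral_const_mul, integral_const_mul, key]

lemma fd_exp {ψ : E2 → ℝ} {w : E2 → ℂ} (c : ℝ) (hψ : Differentiable ℝ ψ) (hw : Differentiable ℝ w)
    (x v : E2) : fderiv ℝ (fun y => (Real.exp (c * ψ y) : ℂ) * w y) x v =
      (Real.exp (c * ψ x) : ℂ) * ((c : ℂ) * (fderiv ℝ ψ x v : ℂ) * w x + fderiv ℝ w x v) := by
  have h1 : HasFDerivAt (fun y => Real.exp (c * ψ y)) _ x :=
    ((hψ x).hasFDerivAt.const_mul c).exp
  have h2 := Complex.ofRealCLM.hasFDerivAt.comp x h1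
  have h3 := h2.mul (hw x).hasFDerivAt
  have h4 : (fun y => (Real.exp (c * ψ y) : ℂ) * w y) =
    (Complex.ofRealCLM ∘ fun y => Real.exp (c * ψ y)) * w := by funext y; simp
  rw [h4, h3.fderiv]
  simp
  ring

lemma fd_mul_ofReal {ψ : E2 → ℝ} {w : E2 → ℂ} (hψ : Differentiable ℝ ψ) (hw : Differentiable ℝ w)
    (x v : E2) : fderiv ℝ (fun y => (ψ y : ℂ) * w y) x v =
      (ψ x : ℂ) * fderiv ℝ w x v + (fderiv ℝ ψ x v : ℂ) * w x := by
  have h2 := Complex.ofRealCLM.hasFDerivAt.comp x (hψ x).hasFDerivAt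
  have h3 := h2.mul (hw x).hasFDerivAt
  have h4 : (fun y => (ψ y : ℂ) * w y) = (Complex.ofRealCLM ∘ ψ) * w := by funext y; simp
  rw [h4, h3.fderiv]
  simp
  ring

lemma lap_exp {ψ : E2 → ℝ} {u : E2 → ℂ} (c : ℝ) (hψ : ContDiff ℝ (⊤ : ℕ∞) ψ)
    (hu : ContDiff ℝ (⊤ : ℕ∞) u) (x : E2) :
    lapC (fun y => (Real.exp (c * ψ y) : ℂ) * u y) x = (Real.exp (c * ψ x) : ℂ) *
      ∑ i, ((c : ℂ)^2 * (fderiv ℝ ψ x (basis2 i) : ℂ)^2 * u x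
        + 2 * c * (fderiv ℝ ψ x (basis2 i) : ℂ) * fderiv ℝ u x (basis2 i)
        + c * (fderiv ℝ (fun y => fderiv ℝ ψ y (basis2 i)) x (basis2 i) : ℂ) * u x
        + fderiv ℝ (fun y => fderiv ℝ u y (basis2 i)) x (basis2 i)) := by
  unfold lapC
  rw [Finset.mul_sum]
  refine Finset.sum_congr rfl fun i _ => ?_
  simp only [fd_exp c (df hψ) (df hu)]
  have s1 : ContDiff ℝ (⊤ : ℕ∞) (fun y => (fderiv ℝ ψ y (basis2 i) : ℂ) * u y) :=
    (Complex.ofRealCLM.contDiff.comp (sm_D hψ (basis2 i))).mul hu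
  have s2 := sm_D hu (basis2 i)
  have s3 : ContDiff ℝ (⊤ : ℕ∞) (fun y => (c : ℂ) * ((fderiv ℝ ψ y (basis2 i) : ℂ) * u y)) :=
    contDiff_const.mul s1
  simp only [mul_assoc (c : ℂ)]
  rw [fd_exp c (df hψ) (df (s3.add s2)), fderiv_fun_add (df s3 x) (df s2 x),
    fderiv_const_mul (df s1 x)]
  simp only [ContinuousLinearMap.add_apply, ContinuousLinearMap.smul_apply,
    fd_mul_ofReal (df (sm_D hψ (basis2 i))) (df hu), smul_eq_mul]
  ring

lemma diffA {h : ℝ} (hh : 0 < h) {φ : E2 → ℝ} {u : E2 → ℂ} (hφ : ContDiff ℝ (⊤ : ℕ∞) φ)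
    (hu : ContDiff ℝ (⊤ : ℕ∞) u) (x : E2) :
    opA h φ u x - opAstar h φ u x = ∑ i, (
      4 * h * (fderiv ℝ φ x (basis2 i) : ℂ) * fderiv ℝ u x (basis2 i)
      + 2 * h * (fderiv ℝ (fun y => fderiv ℝ φ y (basis2 i)) x (basis2 i) : ℂ) * u x) := by
  have p1 : ∀ y, -φ y / h = (-(1/h)) * φ y := fun y => by ring
  have p2 : ∀ y, φ y / h = (1/h) * φ y := fun y => by ring
  have q1 : (Real.exp ((1/h) * φ x) : ℂ) * (Real.exp ((-(1/h)) * φ x) : ℂ) = 1 := by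
    rw [← Complex.ofReal_mul, ← Real.exp_add]; simp
  have hc : (h : ℂ) ≠ 0 := by exact_mod_cast hh.ne'
  unfold opA opAstar
  simp only [p1, p2]
  rw [lap_exp _ hφ hu, lap_exp _ hφ hu]
  generalize (Real.exp ((1/h) * φ x) : ℂ) = a at *
  generalize (Real.exp ((-(1/h)) * φ x) : ℂ) = b at *
  have r : ∀ s t : ℂ, a * (-(h:ℂ)^2 * (b * s)) - b * (-(h:ℂ)^2 * (a * t)) = (h:ℂ)^2 * (t - s) := by
    intro s t; linear_combination (-(h:ℂ)^2 * s + (h:ℂ)^2 * t) * q1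
  rw [r, ← Finset.sum_sub_distrib, Finset.mul_sum]
  refine Finset.sum_congr rfl fun i _ => ?_
  push_cast
  field_simp
  ring

lemma fd_N {u : E2 → ℂ} {ψ : E2 → ℝ} (hψ : Differentiable ℝ ψ) (hu : Differentiable ℝ u) (x v : E2) :
    fderiv ℝ (fun y => ‖u y‖^2 * ψ y) x v =
      2 * (fderiv ℝ u x v * (starRingEnd ℂ) (u x)).re * ψ x + ‖u x‖^2 * fderiv ℝ ψ x v := by
  have h1 := (hu x).hasFDerivAt.norm_sq
  have h3 := h1.mul (hψ x).hasFDerivAt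
  have h4 : (fun y => ‖u y‖^2 * ψ y) = (fun y => ‖u y‖^2) * ψ := rfl
  rw [h4, h3.fderiv]
  simp [Complex.inner]
  ring

theorem stmt2 (h : ℝ) (hh : 0 < h)
    (φ : E2 → ℝ) (hφ : ContDiff ℝ (⊤ : ℕ∞) φ)
    (W : E2 → ℝ) (hW : ContDiff ℝ 1 W) (hWbdd : ∃ B : ℝ, ∀ x, |W x| ≤ B)
    (M : ℝ)
    (hM : ∀ x : E2, |∑ i, fderiv ℝ W x (basis2 i) * fderiv ℝ φ x (basis2 i)| ≤ M)
    (u : E2 → ℂ) (hu : ContDiff ℝ (⊤ : ℕ∞) u) (hucpt : HasCompactSupport u) :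
    (1 / h) * ∫ x : E2, ‖opP h φ W u x‖ ^ 2 ≥
      (1 / h) * (∫ x : E2,
          (opAstar h φ (opA h φ u) x - opA h φ (opAstar h φ u) x) *
            (starRingEnd ℂ) (u x)).re -
        4 * M * ∫ x : E2, ‖u x‖ ^ 2 := by
  have hφn : ContDiff ℝ (⊤ : ℕ∞) (fun y => - φ y) := hφ.neg
  have sa := sm_A (h := h) hφ hu
  have ca := cs_A (h := h) (φ := φ) hucpt
  have sb : ContDiff ℝ (⊤ : ℕ∞) (opAstar h φ u) := by rw [star_eq]; exact sm_A hφn hu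
  have cb : HasCompactSupport (opAstar h φ u) := by rw [star_eq]; exact cs_A hucpt
  have saa : ContDiff ℝ (⊤ : ℕ∞) (opAstar h φ (opA h φ u)) := by rw [star_eq]; exact sm_A hφn sa
  have sbb : ContDiff ℝ (⊤ : ℕ∞) (opA h φ (opAstar h φ u)) := sm_A hφ sb
  have I2 := adj (h := h) hφ hu hucpt sb cb
  have I1 : ∫ x, opAstar h φ (opA h φ u) x * (starRingEnd ℂ) (u x) =
      ∫ x, opA h φ u x * (starRingEnd ℂ) (opA h φ u x) := by
    have := adj (h := h) hφn hu hucpt sa ca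
    simpa only [star_eq, neg_neg] using this
  have scu := (sm_conj hu).continuous
  have ccu := cs_conj hucpt
  have nsq : ∀ f : E2 → ℂ, (∫ x, f x * (starRingEnd ℂ) (f x)).re = ∫ x, ‖f x‖^2 := by
    intro f
    have : ∀ x, f x * (starRingEnd ℂ) (f x) = ((‖f x‖^2 : ℝ) : ℂ) := fun x => by
      rw [Complex.mul_conj, Complex.normSq_eq_norm_sq]
    simp only [this]
    rw [integral_complex_ofReal, Complex.ofReal_re]
  have comm : (∫ x : E2,
          (opAstar h φ (opA h φ u) x - opA h φ (opAstar h φ u) x) *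
            (starRingEnd ℂ) (u x)).re = (∫ x, ‖opA h φ u x‖^2) - ∫ x, ‖opAstar h φ u x‖^2 := by
    simp only [sub_mul]
    have j1 : Integrable (fun x => opAstar h φ (opA h φ u) x * (starRingEnd ℂ) (u x)) :=
      int_cs (saa.continuous.mul scu) (HasCompactSupport.mul_left ccu)
    have j2 : Integrable (fun x => opA h φ (opAstar h φ u) x * (starRingEnd ℂ) (u x)) :=
      int_cs (sbb.continuous.mul scu) (HasCompactSupport.mul_left ccu)
    rw [integral_sub j1 j2, I1, I2, Complex.sub_re,
      nsq, nsq]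
  rw [comm]
  have hP : ∀ x, opP h φ W u x = opA h φ u x + (W x : ℂ) * u x := by
    intro x
    have q1 : (Real.exp (φ x / h) : ℂ) * (Real.exp (-φ x / h) : ℂ) = 1 := by
      rw [← Complex.ofReal_mul, ← Real.exp_add]; simp [neg_div]
    unfold opP opA
    linear_combination (W x : ℂ) * u x * q1
  have sN : ∀ i, ContDiff ℝ (⊤ : ℕ∞) (fun y => ‖u y‖^2 * fderiv ℝ φ y (basis2 i)) := fun i =>
    (hu.norm_sq ℝ).mul (sm_D hφ _)
  have cN0 : HasCompactSupport (fun y => ‖u y‖^2) :=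
    hucpt.comp_left (g := fun z => ‖z‖^2) (by simp)
  have cN : ∀ i, HasCompactSupport (fun y => ‖u y‖^2 * fderiv ℝ φ y (basis2 i)) := fun i =>
    cN0.mul_right
  have point : ∀ x, ‖opP h φ W u x‖^2 = ‖opAstar h φ u x + (W x : ℂ) * u x‖^2 +
      ‖opA h φ u x‖^2 - ‖opAstar h φ u x‖^2 + 4 * h * ∑ i, W x *
        fderiv ℝ (fun y => ‖u y‖^2 * fderiv ℝ φ y (basis2 i)) x (basis2 i) := by
    intro x
    have d := diffA hh hφ hu x
    simp only [fd_N (df (sm_D hφ _)) (df hu)]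
    rw [hP]
    have d2 : ‖opA h φ u x + (W x : ℂ) * u x‖^2 = ‖opAstar h φ u x + (W x : ℂ) * u x‖^2 +
      ‖opA h φ u x‖^2 - ‖opAstar h φ u x‖^2 +
        2 * W x * ((opA h φ u x - opAstar h φ u x) * (starRingEnd ℂ) (u x)).re := by
      simp only [← Complex.normSq_eq_norm_sq, Complex.normSq_apply, Complex.mul_re, Complex.mul_im,
        Complex.add_re, Complex.add_im, Complex.sub_re, Complex.sub_im, Complex.conj_re,
        Complex.conj_im, Complex.ofReal_re, Complex.ofReal_im]
      ring
    rw [d2, d]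
    congr 1
    simp only [Fin.sum_univ_two, ← Complex.normSq_eq_norm_sq, Complex.normSq_apply, Complex.mul_re,
        Complex.mul_im,
        Complex.add_re, Complex.add_im, Complex.sub_re, Complex.sub_im, Complex.conj_re,
        Complex.conj_im, Complex.ofReal_re, Complex.ofReal_im, Complex.re_ofNat, Complex.im_ofNat]
    ring
  have sq_int : ∀ f : E2 → ℂ, Continuous f → HasCompactSupport f →
      Integrable (fun x => ‖f x‖^2) := fun f hf hc =>
    int_cs (hf.norm.pow 2) (hc.comp_left (g := fun z => ‖z‖^2) (by simp))
  have ia := sq_int _ sa.continuous ca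
  have ib := sq_int _ sb.continuous cb
  have cW : Continuous (fun x => (W x : ℂ)) := Complex.continuous_ofReal.comp hW.continuous
  have ic := sq_int (fun x => opAstar h φ u x + (W x : ℂ) * u x)
    (sb.continuous.add (cW.mul hu.continuous)) (cb.add (HasCompactSupport.mul_left hucpt))
  have id' : ∀ i, Integrable (fun x => W x *
        fderiv ℝ (fun y => ‖u y‖^2 * fderiv ℝ φ y (basis2 i)) x (basis2 i)) := fun i =>
    int_cs (hW.continuous.mul (sm_D (sN i) _).continuous)
      (HasCompactSupport.mul_left (cs_D (cN i) _))
  have cDW : ∀ i, Continuous (fun x => fderiv ℝ W x (basis2 i)) := fun i =>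
    (hW.continuous_fderiv (by simp)).clm_apply continuous_const
  have ie : ∀ i, Integrable (fun x => fderiv ℝ W x (basis2 i) *
        (‖u x‖^2 * fderiv ℝ φ x (basis2 i))) := fun i =>
    int_cs ((cDW i).mul (sN i).continuous) (HasCompactSupport.mul_left (cN i))
  have total : ∫ x, ‖opP h φ W u x‖^2 = (∫ x, ‖opAstar h φ u x + (W x : ℂ) * u x‖^2) +
      (∫ x, ‖opA h φ u x‖^2) - (∫ x, ‖opAstar h φ u x‖^2) + 4 * h * ∑ i, ∫ x, W x *
        fderiv ℝ (fun y => ‖u y‖^2 * fderiv ℝ φ y (basis2 i)) x (basis2 i) := by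
    simp only [point]
    have k1 : Integrable (fun x => ‖opAstar h φ u x + (W x : ℂ) * u x‖^2 +
      ‖opA h φ u x‖^2) := ic.add ia
    have k2 : Integrable (fun x => ‖opAstar h φ u x + (W x : ℂ) * u x‖^2 +
      ‖opA h φ u x‖^2 - ‖opAstar h φ u x‖^2) := k1.sub ib
    rw [integral_add k2
      ((integrable_finsetSum _ fun i _ => id' i).const_mul _),
      integral_sub k1 ib, integral_add ic ia, integral_const_mul,
      integral_finsetSum _ fun i _ => id' i]
  have parts : ∑ i, ∫ x, W x *
        fderiv ℝ (fun y => ‖u y‖^2 * fderiv ℝ φ y (basis2 i)) x (basis2 i) =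
      - ∫ x, ∑ i, fderiv ℝ W x (basis2 i) * (‖u x‖^2 * fderiv ℝ φ x (basis2 i)) := by
    rw [integral_finsetSum _ fun i _ => ie i, ← Finset.sum_neg_distrib]
    exact Finset.sum_congr rfl fun i _ => ibp hW (sm1 (sN i)) (cN i) _
  have bound : ∫ x, ∑ i, fderiv ℝ W x (basis2 i) * (‖u x‖^2 * fderiv ℝ φ x (basis2 i)) ≤
      M * ∫ x, ‖u x‖^2 := by
    rw [← integral_const_mul]
    refine integral_mono (integrable_finsetSum _ fun i _ => ie i)
      ((sq_int _ hu.continuous hucpt).const_mul M) fun x => ?_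
    have h1 := (abs_le.mp (hM x)).2
    have h2 := mul_le_mul_of_nonneg_right h1 (sq_nonneg ‖u x‖)
    refine le_trans (le_of_eq ?_) h2
    rw [Finset.sum_mul]
    exact Finset.sum_congr rfl fun i _ => by ring
  have nn : 0 ≤ ∫ x, ‖opAstar h φ u x + (W x : ℂ) * u x‖^2 :=
    integral_nonneg fun x => sq_nonneg _
  rw [total, parts]
  have fin : ∀ a b c d N : ℝ, 0 ≤ c → d ≤ M * N →
      1 / h * (c + a - b + 4 * h * -d) ≥ 1 / h * (a - b) - 4 * M * N := by
    intro a b c d N hc hd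
    have e : 1 / h * (c + a - b + 4 * h * -d) = 1/h * c + 1/h * (a - b) - 4 * d := by
      field_simp
      ring
    have : 0 ≤ 1/h * c := by positivity
    rw [e]; linarith
  exact fin _ _ _ _ _ nn bound
end
end

section
/- Let c > 0 and ω ∈ ℝ. For r > 0 and ρ ∈ ℝ define a(r,ρ) := ρ² − c²e^{2r} + ω²/r² and b(r,ρ) := 2ρ c e^{r} (the real and imaginary parts of the conjugated symbol p_φ(r,ρ) = (ρ + i c e^{r})² + ω²/r² with weight φ(r) = c e^{r}). Then for all r > 0 and ρ ∈ ℝ, (∂_ρ a)(r,ρ)·(∂_r b)(r,ρ) − (∂_r a)(r,ρ)·(∂_ρ b)(r,ρ) = 4 c e^{r} ρ² + 4 c e^{r}(c² e^{2r} + ω²/r³) > 4(c ρ² + c³). In particular, if a(r,ρ) = 0 and b(r,ρ) = 0 then this Poisson bracket is ≥ 4c³ > 0. -/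
noncomputable section

/-- Real part of the conjugated symbol `p_φ(r,ρ) = (ρ + i c e^r)² + ω²/r²`
with Carleman weight `φ(r) = c e^r`. -/
def reSymb (c ω r ρ : ℝ) : ℝ := ρ ^ 2 - c ^ 2 * Real.exp (2 * r) + ω ^ 2 / r ^ 2

/-- Imaginary part of the conjugated symbol. -/
def imSymb (c r ρ : ℝ) : ℝ := 2 * ρ * c * Real.exp r

/-- The Poisson bracket `{Re p_φ, Im p_φ} = ∂_ρ a · ∂_r b − ∂_r a · ∂_ρ b`. -/
def bracket (c ω r ρ : ℝ) : ℝ :=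
  deriv (fun ρ' => reSymb c ω r ρ') ρ * deriv (fun r' => imSymb c r' ρ) r -
    deriv (fun r' => reSymb c ω r' ρ) r * deriv (fun ρ' => imSymb c r ρ') ρ

theorem stmt4 (c ω : ℝ) (hc : 0 < c) :
    ∀ r : ℝ, 0 < r → ∀ ρ : ℝ,
      bracket c ω r ρ =
          4 * c * Real.exp r * ρ ^ 2 +
            4 * c * Real.exp r * (c ^ 2 * Real.exp (2 * r) + ω ^ 2 / r ^ 3) ∧
        bracket c ω r ρ > 4 * (c * ρ ^ 2 + c ^ 3) ∧
        (reSymb c ω r ρ = 0 → imSymb c r ρ = 0 →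
          bracket c ω r ρ ≥ 4 * c ^ 3) ∧
        0 < 4 * c ^ 3 := by
  intro r hr ρ
  have h1 : HasDerivAt (fun ρ' => reSymb c ω r ρ') (2 * ρ) ρ := by
    have h := (((hasDerivAt_id ρ).pow 2).sub_const (c ^ 2 * Real.exp (2 * r))).add_const
      (ω ^ 2 / r ^ 2)
    refine HasDerivAt.congr_deriv h ?_
    simp
  have h2 : HasDerivAt (fun r' => imSymb c r' ρ) (2 * ρ * c * Real.exp r) r :=
    (Real.hasDerivAt_exp r).const_mul (2 * ρ * c)
  have h3 : HasDerivAt (fun r' => reSymb c ω r' ρ)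
      (-(2 * c ^ 2 * Real.exp (2 * r)) - 2 * ω ^ 2 / r ^ 3) r := by
    have ha := (((hasDerivAt_id r).const_mul 2).exp).const_mul (c ^ 2)
    have hb := (hasDerivAt_const r (ω ^ 2)).div ((hasDerivAt_id r).pow 2)
      (pow_ne_zero 2 hr.ne')
    have h := ((hasDerivAt_const r (ρ ^ 2)).sub ha).add hb
    refine HasDerivAt.congr_deriv h ?_
    simp
    field_simp
    ring
  have h4 : HasDerivAt (fun ρ' => imSymb c r ρ') (2 * c * Real.exp r) ρ := by
    have h := (((hasDerivAt_id ρ).const_mul 2).mul_const c).mul_const (Real.exp r)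
    refine HasDerivAt.congr_deriv h ?_
    simp
  have hB : bracket c ω r ρ =
          4 * c * Real.exp r * ρ ^ 2 +
            4 * c * Real.exp r * (c ^ 2 * Real.exp (2 * r) + ω ^ 2 / r ^ 3) := by
    unfold bracket
    rw [h1.deriv, h2.deriv, h3.deriv, h4.deriv]
    ring
  have hE : 1 < Real.exp r := Real.one_lt_exp_iff.2 hr
  have hE2 : 1 < Real.exp (2 * r) := Real.one_lt_exp_iff.2 (by linarith)
  have hc3 : 0 < c ^ 3 := by positivity
  have hG : bracket c ω r ρ > 4 * (c * ρ ^ 2 + c ^ 3) := by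
    rw [hB]
    have e1 : 0 ≤ c * ρ ^ 2 * (Real.exp r - 1) :=
      mul_nonneg (by positivity) (by linarith)
    have e2 : 0 < c ^ 3 * (Real.exp r * Real.exp (2 * r) - 1) :=
      mul_pos hc3 (by nlinarith)
    have e3 : 0 ≤ c * Real.exp r * (ω ^ 2 / r ^ 3) := by positivity
    nlinarith
  refine ⟨hB, hG, fun _ _ => ?_, by positivity⟩
  have : 0 ≤ c * ρ ^ 2 := by positivity
  linarith
end
end

section
/- Let 0 < r₁ < r₂. There exist constants c > 0, d > 0 and C > 0 such that for all r ∈ [r₁, r₂], ρ ∈ ℝ and ω ∈ ℝ: 8 c e^{r} (ρ² + c² e^{2r} + ω²/r³) + d · ((ρ² − c² e^{2r} + ω²/r²)² + 4 ρ² c² e^{2r}) ≥ C (ρ² + 1)². -/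
noncomputable section

theorem stmt6 (r₁ r₂ : ℝ) (hr₁ : 0 < r₁) (hr₁₂ : r₁ < r₂) :
    ∃ c > (0 : ℝ), ∃ d > (0 : ℝ), ∃ C > (0 : ℝ),
      ∀ r ∈ Set.Icc r₁ r₂, ∀ ρ ω : ℝ,
        8 * c * Real.exp r * (ρ ^ 2 + c ^ 2 * Real.exp (2 * r) + ω ^ 2 / r ^ 3) +
            d * ((ρ ^ 2 - c ^ 2 * Real.exp (2 * r) + ω ^ 2 / r ^ 2) ^ 2 +
              4 * ρ ^ 2 * c ^ 2 * Real.exp (2 * r)) ≥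
          C * (ρ ^ 2 + 1) ^ 2 := by
  have hKpos : 0 < Real.exp (2 * r₂) := Real.exp_pos _
  refine ⟨1, one_pos, 1, one_pos, 1 / (4 + Real.exp (2 * r₂) ^ 2), by positivity, ?_⟩
  rintro r ⟨h1, h2⟩ ρ ω
  have hr : 0 < r := lt_of_lt_of_le hr₁ h1
  have hE : 1 ≤ Real.exp r := Real.one_le_exp hr.le
  have hA : 1 ≤ Real.exp (2 * r) := Real.one_le_exp (by linarith)
  have hAK : Real.exp (2 * r) ≤ Real.exp (2 * r₂) := Real.exp_le_exp.mpr (by linarith)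
  have hV : 0 ≤ ω ^ 2 / r ^ 3 := by positivity
  have hW : 0 ≤ ω ^ 2 / r ^ 2 := by positivity
  have hx : 0 ≤ ρ ^ 2 := sq_nonneg ρ
  generalize Real.exp (2 * r₂) = K at *
  generalize Real.exp (2 * r) = A at *
  generalize Real.exp r = E at *
  generalize ω ^ 2 / r ^ 3 = V at *
  generalize ω ^ 2 / r ^ 2 = W at *
  generalize ρ ^ 2 = x at *
  have hu : x ^ 2 ≤ 2 * (x - A + W) ^ 2 + 2 * A ^ 2 := by
    have h : x ^ 2 ≤ (|x - A + W| + A) ^ 2 := by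
      apply pow_le_pow_left₀ hx
      linarith [le_abs_self (x - A + W)]
    nlinarith [sq_abs (x - A + W), sq_nonneg (|x - A + W| - A)]
  have hA2 : A ^ 2 ≤ K ^ 2 := pow_le_pow_left₀ (by linarith) hAK 2
  have h8 : 8 ≤ 8 * E * (x + A + V) := by nlinarith
  have hxA : 0 ≤ x * A := by positivity
  have hL : (x - A + W) ^ 2 + 8 ≤ 8 * 1 * E * (x + 1 ^ 2 * A + V) +
      1 * ((x - 1 ^ 2 * A + W) ^ 2 + 4 * x * 1 ^ 2 * A) := by
    ring_nf at h8 hxA ⊢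
    linarith
  refine le_trans ?_ hL
  rw [div_mul_eq_mul_div, div_le_iff₀ (by positivity)]
  generalize x - A + W = u at *
  nlinarith [sq_nonneg (x - 1), mul_nonneg (sq_nonneg u) (sq_nonneg K)]
end
end

section
/- Let 0 < r₁ < r₂. There exist a constant c > 0 defining the weight φ(x) := c·e^{‖x‖}, and constants ε > 0, h₀ > 0 and C > 0, such that for every W ∈ C¹(ℝ², ℝ) with sup_{ℝ²}|W| ≤ ε and sup_{ℝ²}‖∇W‖ ≤ ε, every h ∈ (0, h₀] and every u ∈ C_c^∞(A(0,r₁,r₂), ℂ): h ∫_{ℝ²} (|u|² + |h∇u|²) ≤ C ∫_{ℝ²} |e^{φ/h}(−h²Δ + W)(e^{−φ/h}u)|². -/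
open MeasureTheory Metric Set

noncomputable section

/-- Squared Euclidean norm of the gradient of a complex-valued function. -/
def gradSq (u : E2 → ℂ) (x : E2) : ℝ := ∑ i, ‖fderiv ℝ u x (basis2 i)‖ ^ 2

/-- Euclidean norm of the gradient of a real-valued function. -/
def gradNormR (W : E2 → ℝ) (x : E2) : ℝ :=
  Real.sqrt (∑ i, (fderiv ℝ W x (basis2 i)) ^ 2)

/-- The conjugated Schrödinger operator `e^{φ/h}(−h²Δ + W)(e^{−φ/h} u)`. -/
def opPW (h : ℝ) (φ : E2 → ℝ) (W : E2 → ℝ) (u : E2 → ℂ) (x : E2) : ℂ :=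
  (Real.exp (φ x / h) : ℂ) *
    (-(h ^ 2 : ℂ) * lapC (fun y => (Real.exp (-φ y / h) : ℂ) * u y) x +
      (W x : ℂ) * ((Real.exp (-φ x / h) : ℂ) * u x))

/-- Partial derivative. -/
def Dp {F : Type*} [NormedAddCommGroup F] [NormedSpace ℝ F] (i : Fin 2) (f : E2 → F) (x : E2) : F :=
  fderiv ℝ f x (basis2 i)

def HD {F : Type*} [NormedAddCommGroup F] [NormedSpace ℝ F] (i : Fin 2) (f : E2 → F) (f' : F)
    (x : E2) : Prop :=
  DifferentiableAt ℝ f x ∧ fderiv ℝ f x (basis2 i) = f'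

section HDrules
variable {F : Type*} [NormedAddCommGroup F] [NormedSpace ℝ F] {i : Fin 2} {x : E2}

lemma HD.of_diff {f : E2 → F} (hf : DifferentiableAt ℝ f x) : HD i f (Dp i f x) x := ⟨hf, rfl⟩

lemma HD.add {f g : E2 → F} {f' g' : F} (hf : HD i f f' x) (hg : HD i g g' x) :
    HD i (fun y => f y + g y) (f' + g') x :=
  ⟨hf.1.add hg.1, by rw [fderiv_fun_add hf.1 hg.1]; simp [hf.2, hg.2]⟩

lemma HD.sub {f g : E2 → F} {f' g' : F} (hf : HD i f f' x) (hg : HD i g g' x) :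
    HD i (fun y => f y - g y) (f' - g') x :=
  ⟨hf.1.sub hg.1, by rw [fderiv_fun_sub hf.1 hg.1]; simp [hf.2, hg.2]⟩

lemma HD.mul {f g : E2 → ℝ} {f' g' : ℝ} (hf : HD i f f' x) (hg : HD i g g' x) :
    HD i (fun y => f y * g y) (f' * g x + f x * g') x :=
  ⟨hf.1.mul hg.1, by rw [fderiv_fun_mul hf.1 hg.1]; simp [hf.2, hg.2]; ring⟩

lemma HD.cmul {f g : E2 → ℂ} {f' g' : ℂ} (hf : HD i f f' x) (hg : HD i g g' x) :
    HD i (fun y => f y * g y) (f' * g x + f x * g') x :=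
  ⟨hf.1.mul hg.1, by rw [fderiv_fun_mul hf.1 hg.1]; simp [hf.2, hg.2]; ring⟩

lemma HD.const (c : F) : HD i (fun _ => c) 0 x := ⟨differentiableAt_const c, by simp⟩

lemma HD.clm {G : Type*} [NormedAddCommGroup G] [NormedSpace ℝ G] (l : F →L[ℝ] G)
    {f : E2 → F} {f' : F} (hf : HD i f f' x) : HD i (fun y => l (f y)) (l f') x := by
  have := l.hasFDerivAt.comp x hf.1.hasFDerivAt
  refine ⟨this.differentiableAt, ?_⟩
  rw [show (fun y => l (f y)) = l ∘ f from rfl, this.fderiv]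
  simp [hf.2]

lemma HD.ofReal {f : E2 → ℝ} {f' : ℝ} (hf : HD i f f' x) :
    HD i (fun y => (f y : ℂ)) (f' : ℂ) x := HD.clm Complex.ofRealCLM hf

lemma HD.comp {f : E2 → ℝ} {f' : ℝ} {g : ℝ → ℝ} {g' : ℝ} (hg : HasDerivAt g g' (f x))
    (hf : HD i f f' x) : HD i (fun y => g (f y)) (g' * f') x := by
  have := hg.comp_hasFDerivAt x hf.1.hasFDerivAt
  refine ⟨this.differentiableAt, ?_⟩
  rw [show (fun y => g (f y)) = g ∘ f from rfl, this.fderiv]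
  simp [hf.2]

lemma HD.congr {f g : E2 → F} {f' : F} (hf : HD i f f' x) (h : g =ᶠ[nhds x] f) : HD i g f' x :=
  ⟨hf.1.congr_of_eventuallyEq h, by rw [h.fderiv_eq]; exact hf.2⟩

lemma HD.eq {f : E2 → F} {f' : F} (hf : HD i f f' x) : Dp i f x = f' := hf.2

lemma HD.val {f : E2 → F} {f' f'' : F} (hf : HD i f f' x) (h : f' = f'') : HD i f f'' x := h ▸ hf

end HDrules

lemma HD.coord (i j : Fin 2) (x : E2) : HD i (fun y : E2 => y j) (if i = j then 1 else 0) x := by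
  have h : HasFDerivAt (fun y : E2 => y j) (EuclideanSpace.proj j : E2 →L[ℝ] ℝ) x :=
    (EuclideanSpace.proj j : E2 →L[ℝ] ℝ).hasFDerivAt
  refine ⟨h.differentiableAt, ?_⟩
  rw [h.fderiv]
  simp [basis2, eq_comm]

lemma nsq (x : E2) : ‖x‖ ^ 2 = x 0 ^ 2 + x 1 ^ 2 := by
  rw [EuclideanSpace.real_norm_sq_eq]; simp

lemma HD.norm (i : Fin 2) {x : E2} (hx : x ≠ 0) : HD i (fun y : E2 => ‖y‖) (x i / ‖x‖) x := by
  have hx' : ‖x‖ ≠ 0 := norm_ne_zero_iff.2 hx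
  have hd : DifferentiableAt ℝ (fun y : E2 => ‖y‖) x :=
    (contDiffAt_norm ℝ hx (n := 1)).differentiableAt (by simp)
  have h1 : HD i (fun y : E2 => ‖y‖) _ x := HD.of_diff hd
  have h2 := (h1.mul h1).eq
  have h3 := (((HD.coord i 0 x).mul (HD.coord i 0 x)).add
    ((HD.coord i 1 x).mul (HD.coord i 1 x))).eq
  have h4 : (fun y : E2 => ‖y‖ * ‖y‖) = fun y => y 0 * y 0 + y 1 * y 1 := by
    funext y; have := nsq y; nlinarith
  rw [h4, h3] at h2
  refine h1.val ?_
  field_simp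
  fin_cases i <;> simp at h2 ⊢ <;> linarith

def ph (i : Fin 2) (y : E2) : ℝ := Real.exp ‖y‖ * (y i / ‖y‖)
def HH (i j : Fin 2) (y : E2) : ℝ :=
  Real.exp ‖y‖ * (y i * y j / ‖y‖ ^ 2 + (if i = j then 1 else 0) / ‖y‖ - y i * y j / ‖y‖ ^ 3)
def LL (y : E2) : ℝ := Real.exp ‖y‖ * (1 + 1 / ‖y‖)
def LD (i : Fin 2) (y : E2) : ℝ := Real.exp ‖y‖ * (1 + 1 / ‖y‖ - 1 / ‖y‖ ^ 2) * (y i / ‖y‖)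

lemma HD.expn (i : Fin 2) {x : E2} (hx : x ≠ 0) : HD i (fun y : E2 => Real.exp ‖y‖) (ph i x) x :=
  HD.comp (Real.hasDerivAt_exp _) (HD.norm i hx)

lemma HD.invn (i : Fin 2) {x : E2} (hx : x ≠ 0) :
    HD i (fun y : E2 => ‖y‖⁻¹) (-(‖x‖ ^ 2)⁻¹ * (x i / ‖x‖)) x :=
  HD.comp (hasDerivAt_inv (norm_ne_zero_iff.2 hx)) (HD.norm i hx)

lemma HD.ph (i j : Fin 2) {x : E2} (hx : x ≠ 0) : HD i (ph j) (HH i j x) x := by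
  have hx' : ‖x‖ ≠ 0 := norm_ne_zero_iff.2 hx
  refine ((HD.expn i hx).mul ((HD.coord i j x).mul (HD.invn i hx))).val ?_
  simp only [_root_.ph, HH]
  field_simp
  ring

lemma HD.LL (i : Fin 2) {x : E2} (hx : x ≠ 0) : HD i LL (LD i x) x := by
  have hx' : ‖x‖ ≠ 0 := norm_ne_zero_iff.2 hx
  have := ((HD.expn i hx).mul ((HD.const 1).add (HD.invn i hx)))
  refine (this.congr (Filter.Eventually.of_forall fun y => by simp [_root_.LL])).val ?_
  simp only [_root_.ph, LD]
  field_simp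
  ring

lemma HH_trace {x : E2} (hx : x ≠ 0) : HH 0 0 x + HH 1 1 x = LL x := by
  have hx' : ‖x‖ ≠ 0 := norm_ne_zero_iff.2 hx
  have := nsq x
  simp only [HH, LL, if_true]
  have h : x 1 ^ 2 = ‖x‖ ^ 2 - x 0 ^ 2 := by linarith
  field_simp
  rw [h]
  ring

lemma HH_symm (x : E2) : HH 1 0 x = HH 0 1 x := by simp [HH, mul_comm]

lemma HH_lower {x : E2} (hx : x ≠ 0) {m : ℝ} (hm0 : 0 ≤ m) (hm1 : m ≤ 1) (hm : m * ‖x‖ ≤ 1)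
    (v w : ℝ) :
    m * (v ^ 2 + w ^ 2) ≤ HH 0 0 x * v ^ 2 + 2 * HH 0 1 x * v * w + HH 1 1 x * w ^ 2 := by
  have hx' : 0 < ‖x‖ := norm_pos_iff.2 hx
  have hr := nsq x
  have he : 1 ≤ Real.exp ‖x‖ := Real.one_le_exp hx'.le
  set s := x 0 * v + x 1 * w with hs
  set t := x 0 * w - x 1 * v with ht
  have hst : s ^ 2 + t ^ 2 = ‖x‖ ^ 2 * (v ^ 2 + w ^ 2) := by rw [hr, hs, ht]; ring
  have e1 : HH 0 0 x * v ^ 2 + 2 * HH 0 1 x * v * w + HH 1 1 x * w ^ 2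
      = Real.exp ‖x‖ * (s ^ 2 / ‖x‖ ^ 2 + t ^ 2 / ‖x‖ ^ 3) := by
    have : t ^ 2 = ‖x‖ ^ 2 * (v ^ 2 + w ^ 2) - s ^ 2 := by linarith
    rw [this, hs]
    simp [HH]
    field_simp
    ring
  have e2 : m * (v ^ 2 + w ^ 2) = m * s ^ 2 / ‖x‖ ^ 2 + (m * ‖x‖) * t ^ 2 / ‖x‖ ^ 3 := by
    field_simp
    linear_combination (-m) * hst
  rw [e1, e2]
  have h1 : m * s ^ 2 / ‖x‖ ^ 2 ≤ s ^ 2 / ‖x‖ ^ 2 := by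
    gcongr; nlinarith [sq_nonneg s]
  have h2 : (m * ‖x‖) * t ^ 2 / ‖x‖ ^ 3 ≤ t ^ 2 / ‖x‖ ^ 3 := by
    gcongr; nlinarith [sq_nonneg t]
  have h3 : 0 ≤ s ^ 2 / ‖x‖ ^ 2 + t ^ 2 / ‖x‖ ^ 3 := by positivity
  nlinarith

lemma ph_sq {x : E2} (hx : x ≠ 0) : ph 0 x ^ 2 + ph 1 x ^ 2 = Real.exp ‖x‖ ^ 2 := by
  have hx' : ‖x‖ ≠ 0 := norm_ne_zero_iff.2 hx
  simp only [ph]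
  have hr := nsq x
  field_simp
  linarith

lemma HH_pp {x : E2} (hx : x ≠ 0) :
    HH 0 0 x * ph 0 x ^ 2 + 2 * HH 0 1 x * ph 0 x * ph 1 x + HH 1 1 x * ph 1 x ^ 2
      = Real.exp ‖x‖ ^ 3 := by
  have hx' : ‖x‖ ≠ 0 := norm_ne_zero_iff.2 hx
  have hr := nsq x
  have h : x 1 ^ 2 = ‖x‖ ^ 2 - x 0 ^ 2 := by linarith
  have h4 : x 1 ^ 4 = (‖x‖ ^ 2 - x 0 ^ 2) ^ 2 := by rw [← h]; ring
  simp [HH, ph]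
  field_simp
  ring_nf
  rw [h, h4]
  ring

lemma LD_sq {x : E2} {r₁ r₂ : ℝ} (h0 : 0 < r₁) (h1 : r₁ ≤ ‖x‖) (h2 : ‖x‖ ≤ r₂) :
    LD 0 x ^ 2 + LD 1 x ^ 2 ≤ (Real.exp r₂ * (1 + 1 / r₁ + 1 / r₁ ^ 2)) ^ 2 := by
  have hx' : 0 < ‖x‖ := h0.trans_le h1
  have hr := nsq x
  have e : LD 0 x ^ 2 + LD 1 x ^ 2 = (Real.exp ‖x‖ * (1 + 1 / ‖x‖ - 1 / ‖x‖ ^ 2)) ^ 2 := by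
    simp only [LD]
    have : (x 0 / ‖x‖) ^ 2 + (x 1 / ‖x‖) ^ 2 = 1 := by field_simp; linarith
    linear_combination (Real.exp ‖x‖ * (1 + 1 / ‖x‖ - 1 / ‖x‖ ^ 2)) ^ 2 * this
  rw [e]
  apply sq_le_sq'
  · have : Real.exp ‖x‖ * (1 / ‖x‖ ^ 2 - (1 + 1/‖x‖)) ≤ Real.exp r₂ * (1 + 1 / r₁ + 1 / r₁ ^ 2) := by
      have hA : 1 / ‖x‖ ^ 2 ≤ 1 / r₁ ^ 2 := by gcongr
      have : 0 < 1 / ‖x‖ := by positivity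
      have : 0 < 1 / r₁ := by positivity
      have : 0 < 1 / r₁ ^ 2 := by positivity
      calc _ ≤ Real.exp ‖x‖ * (1 + 1 / r₁ + 1 / r₁ ^ 2) := by gcongr; linarith
        _ ≤ _ := by gcongr
    linarith
  · have hA : 1 / ‖x‖ ≤ 1 / r₁ := by gcongr
    have : 0 < 1 / ‖x‖ ^ 2 := by positivity
    have : 0 < 1 / r₁ ^ 2 := by positivity
    have : 0 < 1 / r₁ := by positivity
    calc _ ≤ Real.exp ‖x‖ * (1 + 1 / r₁ + 1 / r₁ ^ 2) := by gcongr; linarith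
      _ ≤ _ := by gcongr

lemma Dp_contDiff {F : Type*} [NormedAddCommGroup F] [NormedSpace ℝ F] {a : E2 → F}
    (ha : ContDiff ℝ (⊤ : ℕ∞) a) (i : Fin 2) :
    ContDiff ℝ (⊤ : ℕ∞) (Dp i a) := by
  have : ContDiff ℝ (⊤ : ℕ∞) (fderiv ℝ a) := ha.fderiv_right (by simp)
  exact this.clm_apply contDiff_const

lemma Dp_symm {a : E2 → ℝ} (ha : ContDiff ℝ (⊤ : ℕ∞) a) (i j : Fin 2) (x : E2) :
    Dp i (Dp j a) x = Dp j (Dp i a) x := by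
  have hd : DifferentiableAt ℝ (fderiv ℝ a) x :=
    (ha.fderiv_right (m := (⊤ : ℕ∞)) (by simp)).differentiable (by simp) x
  have hs : IsSymmSndFDerivAt ℝ a x := ha.contDiffAt.isSymmSndFDerivAt (by
    rw [minSmoothness_of_isRCLikeNormedField]
    exact WithTop.coe_le_coe.2 (le_top : (2 : ℕ∞) ≤ ⊤))
  have key : ∀ i j : Fin 2, Dp i (Dp j a) x = fderiv ℝ (fderiv ℝ a) x (basis2 i) (basis2 j) := by
    intro i j
    unfold Dp
    rw [fderiv_clm_apply hd (differentiableAt_const _)]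
    simp
  rw [key, key]
  exact hs _ _

def FF (h : ℝ) (W a : E2 → ℝ) (k : Fin 2) (y : E2) : ℝ :=
  (-2 * h ^ 3) * ((ph 0 y * Dp 0 a y + ph 1 y * Dp 1 a y) * Dp k a y
    - (1 / 2) * ((Dp 0 a y * Dp 0 a y + Dp 1 a y * Dp 1 a y) * ph k y))
  - h ^ 3 * (LL y * (a y * Dp k a y))
  + h * ((W y - (ph 0 y * ph 0 y + ph 1 y * ph 1 y)) * ((a y * a y) * ph k y))

def AA (h : ℝ) (W a : E2 → ℝ) (x : E2) : ℝ :=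
  -h ^ 2 * (Dp 0 (Dp 0 a) x + Dp 1 (Dp 1 a) x) + (W x - (ph 0 x ^ 2 + ph 1 x ^ 2)) * a x

def BB (h : ℝ) (a : E2 → ℝ) (x : E2) : ℝ :=
  2 * h * (ph 0 x * Dp 0 a x + ph 1 x * Dp 1 a x) + h * LL x * a x

lemma FF_HD (h : ℝ) {W a : E2 → ℝ} (hW : ContDiff ℝ 1 W) (ha : ContDiff ℝ (⊤ : ℕ∞) a)
    {x : E2} (hx : x ≠ 0) (k : Fin 2) : HD k (FF h W a k)
      ((-2 * h ^ 3) * ((HH k 0 x * Dp 0 a x + ph 0 x * Dp k (Dp 0 a) x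
          + HH k 1 x * Dp 1 a x + ph 1 x * Dp k (Dp 1 a) x) * Dp k a x
          + (ph 0 x * Dp 0 a x + ph 1 x * Dp 1 a x) * Dp k (Dp k a) x
        - ((Dp 0 a x * Dp k (Dp 0 a) x + Dp 1 a x * Dp k (Dp 1 a) x) * ph k x
          + (1 / 2) * (Dp 0 a x ^ 2 + Dp 1 a x ^ 2) * HH k k x))
      - h ^ 3 * (LD k x * a x * Dp k a x + LL x * Dp k a x ^ 2 + LL x * a x * Dp k (Dp k a) x)
      + h * ((Dp k W x - 2 * (ph 0 x * HH k 0 x + ph 1 x * HH k 1 x)) * a x ^ 2 * ph k x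
        + (W x - (ph 0 x ^ 2 + ph 1 x ^ 2)) * (2 * a x * Dp k a x * ph k x + a x ^ 2 * HH k k x))) x := by
  have hWd : HD k W (Dp k W x) x := HD.of_diff (hW.differentiable (by simp) x)
  have had : HD k a (Dp k a x) x := HD.of_diff (ha.differentiable (by simp) x)
  have ha2 : ∀ j, HD k (Dp j a) (Dp k (Dp j a) x) x := fun j =>
    HD.of_diff ((Dp_contDiff ha j).differentiable (by simp) x)
  have hp : ∀ j, HD k (ph j) (HH k j x) x := fun j => HD.ph k j hx
  have hL := HD.LL k hx
  have := (((HD.const (i := k) (x := x) (-2 * h ^ 3)).mul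
      (((((hp 0).mul (ha2 0)).add ((hp 1).mul (ha2 1))).mul (ha2 k)).sub
        ((HD.const (1 / 2 : ℝ)).mul
          ((((ha2 0).mul (ha2 0)).add ((ha2 1).mul (ha2 1))).mul (hp k))))).sub
      ((HD.const (h ^ 3)).mul (hL.mul (had.mul (ha2 k))))).add
      ((HD.const h).mul ((hWd.sub (((hp 0).mul (hp 0)).add ((hp 1).mul (hp 1)))).mul
        ((had.mul had).mul (hp k))))
  refine HD.val this ?_
  ring

lemma div_identity (h : ℝ) {W a : E2 → ℝ} (hW : ContDiff ℝ 1 W) (ha : ContDiff ℝ (⊤ : ℕ∞) a)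
    {x : E2} (hx : x ≠ 0) :
    AA h W a x * BB h a x = Dp 0 (FF h W a 0) x + Dp 1 (FF h W a 1) x
      + 2 * h ^ 3 * (HH 0 0 x * Dp 0 a x ^ 2 + 2 * HH 0 1 x * Dp 0 a x * Dp 1 a x
          + HH 1 1 x * Dp 1 a x ^ 2)
      + 2 * h * (HH 0 0 x * ph 0 x ^ 2 + 2 * HH 0 1 x * ph 0 x * ph 1 x + HH 1 1 x * ph 1 x ^ 2)
          * a x ^ 2
      + h ^ 3 * a x * (LD 0 x * Dp 0 a x + LD 1 x * Dp 1 a x)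
      - h * a x ^ 2 * (Dp 0 W x * ph 0 x + Dp 1 W x * ph 1 x) := by
  rw [(FF_HD h hW ha hx 0).eq, (FF_HD h hW ha hx 1).eq, HH_symm, Dp_symm ha 1 0 x, AA, BB,
    ← HH_trace hx]
  ring

lemma scalar_ineq {h m M ε e a g0 g1 q0 q1 l0 l1 w0 w1 Hg Hp : ℝ} (hh : 0 < h) (hm0 : 0 < m)
    (hm1 : m ≤ 1) (hM : 0 < M) (hhM : h * M ≤ m) (hε : 0 ≤ ε) (he : 0 ≤ e) (hεe : ε * e ≤ 1)
    (hHg : m * (g0 ^ 2 + g1 ^ 2) ≤ Hg) (hHp : 1 ≤ Hp)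
    (hl : l0 ^ 2 + l1 ^ 2 ≤ M ^ 2) (hq : q0 ^ 2 + q1 ^ 2 ≤ e ^ 2) (hw : w0 ^ 2 + w1 ^ 2 ≤ ε ^ 2) :
    h * m * (a ^ 2 + h ^ 2 * (g0 ^ 2 + g1 ^ 2)) ≤
      4 * (2 * h ^ 3 * Hg + 2 * h * Hp * a ^ 2 + h ^ 3 * a * (l0 * g0 + l1 * g1)
        - h * a ^ 2 * (w0 * q0 + w1 * q1)) := by
  have h1 : w0 * q0 + w1 * q1 ≤ 1 := by
    have : (w0 * q0 + w1 * q1) ^ 2 ≤ (ε * e) ^ 2 := by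
      have : (w0 * q0 + w1 * q1) ^ 2 ≤ (w0 ^ 2 + w1 ^ 2) * (q0 ^ 2 + q1 ^ 2) := by
        nlinarith [sq_nonneg (w0 * q1 - w1 * q0)]
      have h2 : (w0 ^ 2 + w1 ^ 2) * (q0 ^ 2 + q1 ^ 2) ≤ ε ^ 2 * e ^ 2 := by gcongr
      nlinarith
    exact (abs_le_of_sq_le_sq' this (by positivity)).2.trans hεe
  have h2 : -(m * (a ^ 2 + h ^ 2 * (g0 ^ 2 + g1 ^ 2))) ≤ 2 * h ^ 2 * a * (l0 * g0 + l1 * g1) := by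
    -- 2 * h M |a| |h g|
    have hA : 0 ≤ M * (a ^ 2 + h ^ 2 * (g0 ^ 2 + g1 ^ 2)) + 2 * h * a * (l0 * g0 + l1 * g1) := by
      have hc : (l0 * g0 + l1 * g1) ^ 2 ≤ M ^ 2 * (g0 ^ 2 + g1 ^ 2) := by
        have : (l0 * g0 + l1 * g1) ^ 2 ≤ (l0 ^ 2 + l1 ^ 2) * (g0 ^ 2 + g1 ^ 2) := by
          nlinarith [sq_nonneg (l0 * g1 - l1 * g0)]
        have : (l0 ^ 2 + l1 ^ 2) * (g0 ^ 2 + g1 ^ 2) ≤ M ^ 2 * (g0 ^ 2 + g1 ^ 2) := by gcongr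
        linarith
      have h3 : 0 ≤ M * (M * (a ^ 2 + h ^ 2 * (g0 ^ 2 + g1 ^ 2))
          + 2 * h * a * (l0 * g0 + l1 * g1)) := by
        nlinarith [sq_nonneg (M * a + h * (l0 * g0 + l1 * g1)), mul_le_mul_of_nonneg_left hc (sq_nonneg h)]
      exact nonneg_of_mul_nonneg_right h3 hM
    have hB : 0 ≤ a ^ 2 + h ^ 2 * (g0 ^ 2 + g1 ^ 2) := by positivity
    nlinarith [mul_le_mul_of_nonneg_right hhM hB, mul_nonneg hh.le hA]
  have h3 : h ^ 2 * (m * (g0 ^ 2 + g1 ^ 2)) ≤ h ^ 2 * Hg := by gcongr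
  have h4 : a ^ 2 * (w0 * q0 + w1 * q1) ≤ a ^ 2 * 1 := by gcongr
  have h5 : 1 * a ^ 2 ≤ Hp * a ^ 2 := by gcongr
  have h6 : m * a ^ 2 ≤ 1 * a ^ 2 := by gcongr
  have h7 : 0 ≤ h ^ 2 * (m * (g0 ^ 2 + g1 ^ 2)) := by positivity
  have h8 : m * (a ^ 2 + h ^ 2 * (g0 ^ 2 + g1 ^ 2)) ≤
      4 * (2 * h ^ 2 * Hg + 2 * Hp * a ^ 2 + h ^ 2 * a * (l0 * g0 + l1 * g1)
        - a ^ 2 * (w0 * q0 + w1 * q1)) := by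
    nlinarith [sq_nonneg a]
  have := mul_le_mul_of_nonneg_left h8 hh.le
  linarith

lemma ptwise {r₁ r₂ h m M ε : ℝ} (hr₁ : 0 < r₁) (hh : 0 < h) (hm0 : 0 < m) (hm1 : m ≤ 1)
    (hmr : m * r₂ ≤ 1) (hM : M = Real.exp r₂ * (1 + 1 / r₁ + 1 / r₁ ^ 2)) (hhM : h * M ≤ m)
    (hε : 0 ≤ ε) (hεe : ε * Real.exp r₂ ≤ 1)
    {W a : E2 → ℝ} (hW : ContDiff ℝ 1 W) (hW' : ∀ x, gradNormR W x ≤ ε)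
    (ha : ContDiff ℝ (⊤ : ℕ∞) a) {x : E2} (h1 : r₁ ≤ ‖x‖) (h2 : ‖x‖ ≤ r₂) :
    h * m * (a x ^ 2 + h ^ 2 * (Dp 0 a x ^ 2 + Dp 1 a x ^ 2))
      + 4 * (Dp 0 (FF h W a 0) x + Dp 1 (FF h W a 1) x) ≤ (AA h W a x + BB h a x) ^ 2 := by
  have hx' : 0 < ‖x‖ := hr₁.trans_le h1
  have hx : x ≠ 0 := norm_pos_iff.1 hx'
  have hpp : 1 ≤ HH 0 0 x * ph 0 x ^ 2 + 2 * HH 0 1 x * ph 0 x * ph 1 x + HH 1 1 x * ph 1 x ^ 2 := by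
    rw [HH_pp hx]; exact one_le_pow₀ (Real.one_le_exp hx'.le)
  have key := scalar_ineq (a := a x) (g0 := Dp 0 a x) (g1 := Dp 1 a x) (q0 := ph 0 x) (q1 := ph 1 x)
    (l0 := LD 0 x) (l1 := LD 1 x) (w0 := Dp 0 W x) (w1 := Dp 1 W x)
    (M := M) (e := Real.exp r₂)
    hh hm0 hm1 (by rw [hM]; positivity) hhM hε (Real.exp_pos r₂).le hεe
    (HH_lower hx hm0.le hm1 (by nlinarith) (Dp 0 a x) (Dp 1 a x))
    hpp
    (by rw [hM]; exact LD_sq hr₁ h1 h2)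
    (by rw [ph_sq hx]; gcongr)
    (by
      have := hW' x
      rw [gradNormR, Real.sqrt_le_left hε] at this
      simpa [Dp] using this)
  have id := div_identity h hW ha hx
  nlinarith [sq_nonneg (AA h W a x - BB h a x)]

lemma Dp_zero_off {F : Type*} [NormedAddCommGroup F] [NormedSpace ℝ F] {a : E2 → F} {x : E2}
    (i : Fin 2) (hx : a =ᶠ[nhds x] 0) : Dp i a =ᶠ[nhds x] 0 := by
  have := hx.fderiv (𝕜 := ℝ)
  filter_upwards [this] with y hy
  simp [Dp, hy]

lemma integral_Dp {f : E2 → ℝ} (hf : ContDiff ℝ 1 f) (hc : HasCompactSupport f) (i : Fin 2) :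
    Integrable (Dp i f) ∧ ∫ x, Dp i f x = 0 := by
  have hcont : Continuous (Dp i f) :=
    (hf.continuous_fderiv (by simp)).clm_apply continuous_const
  have hI : Integrable (Dp i f) := hcont.integrable_of_hasCompactSupport (hc.fderiv_apply ℝ _)
  refine ⟨hI, ?_⟩
  have := integral_mul_fderiv_eq_neg_fderiv_mul_of_integrable (μ := (volume : Measure E2))
    (f := fun _ => (1 : ℝ)) (g := f) (v := basis2 i) (by simp) (by simp only [one_mul]; exact hI)
    (by simpa using hf.continuous.integrable_of_hasCompactSupport hc)
    (fun x _ => differentiableAt_const _) (fun x _ => hf.differentiable (by simp) x)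
  change ∫ x, fderiv ℝ f x (basis2 i) = 0
  simpa using this

lemma ev_zero {F : Type*} [NormedAddCommGroup F] {a : E2 → F} {x : E2} (hx : x ∉ tsupport a) :
    a =ᶠ[nhds x] 0 := notMem_tsupport_iff_eventuallyEq.1 hx

lemma tsupport_sub' {F : Type*} [NormedAddCommGroup F] {f : E2 → F} {K : Set E2}
    (hK : IsClosed K) (h : ∀ x ∉ K, f x = 0) : tsupport f ⊆ K := by
  refine closure_minimal (fun x hx => ?_) hK
  by_contra hxK
  exact hx (h x hxK)

section smooth
variable {x : E2}

lemma ph_contDiffAt (hx : x ≠ 0) (i : Fin 2) : ContDiffAt ℝ 1 (ph i) x := by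
  have hn : ContDiffAt ℝ 1 (fun y : E2 => ‖y‖) x := contDiffAt_norm ℝ hx
  have hc : ContDiffAt ℝ 1 (fun y : E2 => y i) x :=
    (EuclideanSpace.proj i : E2 →L[ℝ] ℝ).contDiff.contDiffAt
  exact hn.exp.mul (hc.div hn (norm_ne_zero_iff.2 hx))

lemma LL_contDiffAt (hx : x ≠ 0) : ContDiffAt ℝ 1 LL x := by
  have hn : ContDiffAt ℝ 1 (fun y : E2 => ‖y‖) x := contDiffAt_norm ℝ hx
  exact hn.exp.mul (contDiffAt_const.add (contDiffAt_const.div hn (norm_ne_zero_iff.2 hx)))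

end smooth

lemma FF_contDiff (h : ℝ) {W a : E2 → ℝ} (hW : ContDiff ℝ 1 W) (ha : ContDiff ℝ (⊤ : ℕ∞) a)
    (h0 : (0 : E2) ∉ tsupport a) (hc : HasCompactSupport a) (k : Fin 2) :
    ContDiff ℝ 1 (FF h W a k) ∧ HasCompactSupport (FF h W a k) := by
  have hz : ∀ x ∉ tsupport a, FF h W a k x = 0 := by
    intro x hx
    have h1 := (ev_zero hx).eq_of_nhds
    have h2 := fun i => (Dp_zero_off i (ev_zero hx)).eq_of_nhds
    simp [FF, h1, h2]
  have hs := tsupport_sub' (isClosed_tsupport a) hz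
  refine ⟨contDiff_iff_contDiffAt.2 fun x => ?_, HasCompactSupport.intro hc hz⟩
  by_cases hx : x ∈ tsupport (FF h W a k)
  swap
  · exact (contDiffAt_const (c := (0 : ℝ))).congr_of_eventuallyEq (ev_zero hx)
  have hx0 : x ≠ 0 := by rintro rfl; exact h0 (hs hx)
  have hp := ph_contDiffAt hx0
  have hL := LL_contDiffAt hx0
  have ha1 : ContDiffAt ℝ 1 a x := (ha.of_le (by exact_mod_cast le_top)).contDiffAt
  have ha2 : ∀ i, ContDiffAt ℝ 1 (Dp i a) x := fun i =>
    ((Dp_contDiff ha i).of_le (by exact_mod_cast le_top)).contDiffAt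
  have hWx : ContDiffAt ℝ 1 W x := hW.contDiffAt
  have p0 := hp 0
  have p1 := hp 1
  have pk := hp k
  have a0 := ha2 0
  have a1 := ha2 1
  have ak := ha2 k
  unfold FF
  fun_prop

lemma QQ_integrable (h : ℝ) {W a : E2 → ℝ} (hW : ContDiff ℝ 1 W) (ha : ContDiff ℝ (⊤ : ℕ∞) a)
    (h0 : (0 : E2) ∉ tsupport a) (hc : HasCompactSupport a) :
    Integrable (fun x => (AA h W a x + BB h a x) ^ 2) := by
  have hz : ∀ x ∉ tsupport a, (AA h W a x + BB h a x) ^ 2 = 0 := by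
    intro x hx
    have h1 := (ev_zero hx).eq_of_nhds
    have h2 := fun i => (Dp_zero_off i (ev_zero hx)).eq_of_nhds
    have h3 := fun i => (Dp_zero_off i (Dp_zero_off i (ev_zero hx))).eq_of_nhds
    simp [AA, BB, h1, h2, h3]
  have hs := tsupport_sub' (isClosed_tsupport a) hz
  refine Continuous.integrable_of_hasCompactSupport ?_ (HasCompactSupport.intro hc hz)
  refine continuous_of_tsupport fun x hx => ?_
  have hx0 : x ≠ 0 := by rintro rfl; exact h0 (hs hx)
  have p0 := (ph_contDiffAt hx0 0).continuousAt
  have p1 := (ph_contDiffAt hx0 1).continuousAt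
  have hL := (LL_contDiffAt hx0).continuousAt
  have ha1 : ContinuousAt a x := ha.continuous.continuousAt
  have a0 : ContinuousAt (Dp 0 a) x := (Dp_contDiff ha 0).continuous.continuousAt
  have a1 : ContinuousAt (Dp 1 a) x := (Dp_contDiff ha 1).continuous.continuousAt
  have a00 : ContinuousAt (Dp 0 (Dp 0 a)) x :=
    (Dp_contDiff (Dp_contDiff ha 0) 0).continuous.continuousAt
  have a11 : ContinuousAt (Dp 1 (Dp 1 a)) x :=
    (Dp_contDiff (Dp_contDiff ha 1) 1).continuous.continuousAt
  have hWx : ContinuousAt W x := hW.continuous.continuousAt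
  unfold AA BB
  fun_prop

lemma lhs_integrable (h : ℝ) {a : E2 → ℝ} (ha : ContDiff ℝ (⊤ : ℕ∞) a)
    (hc : HasCompactSupport a) :
    Integrable (fun x => a x ^ 2 + h ^ 2 * (Dp 0 a x ^ 2 + Dp 1 a x ^ 2)) := by
  have hz : ∀ x ∉ tsupport a, a x ^ 2 + h ^ 2 * (Dp 0 a x ^ 2 + Dp 1 a x ^ 2) = 0 := by
    intro x hx
    have h1 := (ev_zero hx).eq_of_nhds
    have h2 := fun i => (Dp_zero_off i (ev_zero hx)).eq_of_nhds
    simp [h1, h2]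
  refine Continuous.integrable_of_hasCompactSupport ?_ (HasCompactSupport.intro hc hz)
  have h1 := ha.continuous
  have a0 := (Dp_contDiff ha 0).continuous
  have a1 := (Dp_contDiff ha 1).continuous
  fun_prop

lemma real_est {r₁ r₂ h m M ε : ℝ} (hr₁ : 0 < r₁) (hh : 0 < h) (hm0 : 0 < m) (hm1 : m ≤ 1)
    (hmr : m * r₂ ≤ 1) (hM : M = Real.exp r₂ * (1 + 1 / r₁ + 1 / r₁ ^ 2)) (hhM : h * M ≤ m)
    (hε : 0 ≤ ε) (hεe : ε * Real.exp r₂ ≤ 1)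
    {W a : E2 → ℝ} (hW : ContDiff ℝ 1 W) (hW' : ∀ x, gradNormR W x ≤ ε)
    (ha : ContDiff ℝ (⊤ : ℕ∞) a) (hc : HasCompactSupport a)
    (hs : tsupport a ⊆ ball (0 : E2) r₂ \ closedBall (0 : E2) r₁) :
    h * m * ∫ x, (a x ^ 2 + h ^ 2 * (Dp 0 a x ^ 2 + Dp 1 a x ^ 2)) ≤
      ∫ x, (AA h W a x + BB h a x) ^ 2 := by
  have h0 : (0 : E2) ∉ tsupport a := by
    intro h0
    have := (hs h0).2
    simp [hr₁.le] at this
  have hF := fun k => FF_contDiff h hW ha h0 hc k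
  have hI := fun k => integral_Dp (hF k).1 (hF k).2 k
  have hL := lhs_integrable h ha hc
  have hLm := hL.const_mul (h * m)
  have hD : Integrable (fun x => 4 * (Dp 0 (FF h W a 0) x + Dp 1 (FF h W a 1) x)) :=
    ((hI 0).1.add (hI 1).1).const_mul 4
  have hD0 : ∫ x, 4 * (Dp 0 (FF h W a 0) x + Dp 1 (FF h W a 1) x) = 0 := by
    rw [integral_const_mul, integral_add (hI 0).1 (hI 1).1, (hI 0).2, (hI 1).2]; simp
  have : ∫ x, (h * m * (a x ^ 2 + h ^ 2 * (Dp 0 a x ^ 2 + Dp 1 a x ^ 2))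
      + 4 * (Dp 0 (FF h W a 0) x + Dp 1 (FF h W a 1) x)) ≤
      ∫ x, (AA h W a x + BB h a x) ^ 2 := by
    refine integral_mono (hLm.add hD) (QQ_integrable h hW ha h0 hc) fun x => ?_
    by_cases hx : x ∈ tsupport a
    · have hx2 := hs hx
      simp only [mem_sdiff, mem_ball_zero_iff, mem_closedBall_zero_iff, not_le] at hx2
      exact ptwise hr₁ hh hm0 hm1 hmr hM hhM hε hεe hW hW' ha hx2.2.le hx2.1.le
    · have h1 := (ev_zero hx).eq_of_nhds
      have h2 := fun i => (Dp_zero_off i (ev_zero hx)).eq_of_nhds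
      have h3 : ∀ k, FF h W a k =ᶠ[nhds x] 0 := by
        intro k
        filter_upwards [ev_zero hx, Dp_zero_off 0 (ev_zero hx), Dp_zero_off 1 (ev_zero hx),
          Dp_zero_off k (ev_zero hx)] with y h1 h2 h3 h4
        simp [FF, h1, h2, h3, h4]
      have h4 := fun k => (Dp_zero_off k (h3 k)).eq_of_nhds
      have : h * m * (a x ^ 2 + h ^ 2 * (Dp 0 a x ^ 2 + Dp 1 a x ^ 2))
        + 4 * (Dp 0 (FF h W a 0) x + Dp 1 (FF h W a 1) x) = 0 := by simp [h1, h2, h4]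
      simp only [this]
      positivity
  rw [integral_add hLm hD, hD0, integral_const_mul] at this
  simpa using this

lemma lapC_conj {h : ℝ} (hh : 0 < h) {u : E2 → ℂ} (hu : ContDiff ℝ (⊤ : ℕ∞) u) {x : E2}
    (hx : x ≠ 0) (i : Fin 2) :
    Dp i (Dp i (fun y => (Real.exp (-(1 * Real.exp ‖y‖) / h) : ℂ) * u y)) x
      = (Real.exp (-(1 * Real.exp ‖x‖) / h) : ℂ) * (Dp i (Dp i u) x
        - 2 * ((ph i x : ℂ) / h) * Dp i u x - (HH i i x : ℂ) / h * u x
        + (ph i x : ℂ) ^ 2 / h ^ 2 * u x) := by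
  have hE : ∀ y : E2, y ≠ 0 → HD i (fun y => (Real.exp (-(1 * Real.exp ‖y‖) / h) : ℂ))
      ((Real.exp (-(1 * Real.exp ‖y‖) / h) * (ph i y * (-(1/h))) : ℝ) : ℂ) y := by
    intro y hy
    have h1 := HD.ofReal (HD.comp (Real.hasDerivAt_exp _)
      ((HD.expn i hy).mul (HD.const (-(1 / h)))))
    have h2 : ∀ y : E2, Real.exp ‖y‖ * -(1 / h) = -(1 * Real.exp ‖y‖) / h := by
      intro y; ring
    simp only [h2] at h1
    refine h1.val ?_
    push_cast; ring
  have hud : ∀ y, HD i u (Dp i u y) y := fun y => HD.of_diff (hu.differentiable (by simp) y)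
  have hudd : HD i (Dp i u) (Dp i (Dp i u) x) x :=
    HD.of_diff ((Dp_contDiff hu i).differentiable (by simp) x)
  have hev : Dp i (fun y => (Real.exp (-(1 * Real.exp ‖y‖) / h) : ℂ) * u y) =ᶠ[nhds x]
      fun y => (Real.exp (-(1 * Real.exp ‖y‖) / h) : ℂ) *
        (((ph i y : ℂ) * (-(1/h) : ℂ)) * u y + Dp i u y) := by
    filter_upwards [isOpen_ne.mem_nhds hx] with y hy
    rw [((hE y hy).cmul (hud y)).eq]
    push_cast; ring
  have hp := HD.ofReal (HD.ph i i hx)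
  have := ((hE x hx).cmul (((hp.cmul (HD.const (-(1/h) : ℂ))).cmul (hud x)).add hudd)).congr hev
  rw [this.eq]
  have : (h : ℂ) ≠ 0 := by exact_mod_cast hh.ne'
  push_cast
  field_simp
  ring

lemma clm_D (l : ℂ →L[ℝ] ℝ) {u : E2 → ℂ} (hu : ContDiff ℝ (⊤ : ℕ∞) u) (i : Fin 2) :
    Dp i (fun y => l (u y)) = fun y => l (Dp i u y) := by
  funext y
  exact (HD.clm l (HD.of_diff (hu.differentiable (by simp) y))).eq

lemma clm_DD (l : ℂ →L[ℝ] ℝ) {u : E2 → ℂ} (hu : ContDiff ℝ (⊤ : ℕ∞) u) (i : Fin 2) (x : E2) :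
    Dp i (Dp i (fun y => l (u y))) x = l (Dp i (Dp i u) x) := by
  rw [clm_D l hu, clm_D l (Dp_contDiff hu i)]

lemma opPW_eq {h : ℝ} (hh : 0 < h) (W : E2 → ℝ) {u : E2 → ℂ} (hu : ContDiff ℝ (⊤ : ℕ∞) u)
    (h0 : (0 : E2) ∉ tsupport u) (x : E2) :
    ‖opPW h (fun y => 1 * Real.exp ‖y‖) W u x‖ ^ 2 =
      (AA h W (fun y => Complex.reCLM (u y)) x + BB h (fun y => Complex.reCLM (u y)) x) ^ 2 +
      (AA h W (fun y => Complex.imCLM (u y)) x + BB h (fun y => Complex.imCLM (u y)) x) ^ 2 := by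
  have hlap : ∀ v : E2 → ℂ, lapC v x = Dp 0 (Dp 0 v) x + Dp 1 (Dp 1 v) x := by
    intro v; simp only [lapC, Fin.sum_univ_two]; rfl
  unfold opPW
  rw [hlap]
  unfold AA BB
  simp only [clm_D _ hu, clm_D _ (Dp_contDiff hu _)]
  by_cases hx : x = 0
  · subst hx
    have e := ev_zero h0
    have h1 := e.eq_of_nhds
    have h2 := fun i => (Dp_zero_off i e).eq_of_nhds
    have h3 := fun i => (Dp_zero_off i (Dp_zero_off i e)).eq_of_nhds
    have e' : (fun y => (Real.exp (-(1 * Real.exp ‖y‖) / h) : ℂ) * u y) =ᶠ[nhds 0] 0 := by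
      filter_upwards [e] with y hy; simp [hy]
    have h4 := fun i => (Dp_zero_off i (Dp_zero_off i e')).eq_of_nhds
    simp only [h1, h2, h3, h4]
    simp
  · rw [lapC_conj hh hu hx, lapC_conj hh hu hx]
    have hE : (Real.exp (1 * Real.exp ‖x‖ / h) : ℂ) *
        (Real.exp (-(1 * Real.exp ‖x‖) / h) : ℂ) = 1 := by
      rw [← Complex.ofReal_mul, ← Real.exp_add]
      simp [neg_div]
    have hhc : (h : ℂ) ≠ 0 := by exact_mod_cast hh.ne'
    have hT : (HH 0 0 x : ℂ) + HH 1 1 x = LL x := by exact_mod_cast HH_trace hx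
    have key : (Real.exp (1 * Real.exp ‖x‖ / h) : ℂ) *
      (-(h ^ 2 : ℂ) * ((Real.exp (-(1 * Real.exp ‖x‖) / h) : ℂ) * (Dp 0 (Dp 0 u) x
        - 2 * ((ph 0 x : ℂ) / h) * Dp 0 u x - (HH 0 0 x : ℂ) / h * u x
        + (ph 0 x : ℂ) ^ 2 / h ^ 2 * u x) + (Real.exp (-(1 * Real.exp ‖x‖) / h) : ℂ) *
        (Dp 1 (Dp 1 u) x
        - 2 * ((ph 1 x : ℂ) / h) * Dp 1 u x - (HH 1 1 x : ℂ) / h * u x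
        + (ph 1 x : ℂ) ^ 2 / h ^ 2 * u x)) +
      (W x : ℂ) * ((Real.exp (-(1 * Real.exp ‖x‖) / h) : ℂ) * u x)) =
      ((-h ^ 2 : ℝ) : ℂ) * (Dp 0 (Dp 0 u) x + Dp 1 (Dp 1 u) x)
        + ((W x - (ph 0 x ^ 2 + ph 1 x ^ 2) : ℝ) : ℂ) * u x
        + (((2 * h * ph 0 x : ℝ) : ℂ) * Dp 0 u x + ((2 * h * ph 1 x : ℝ) : ℂ) * Dp 1 u x
          + ((h * LL x : ℝ) : ℂ) * u x) := by
      generalize (Real.exp (1 * Real.exp ‖x‖ / h) : ℂ) = P at *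
      generalize (Real.exp (-(1 * Real.exp ‖x‖) / h) : ℂ) = N at *
      push_cast
      rw [← hT]
      have : P * (-(h ^ 2 : ℂ) * (N * (Dp 0 (Dp 0 u) x
        - 2 * ((ph 0 x : ℂ) / h) * Dp 0 u x - (HH 0 0 x : ℂ) / h * u x
        + (ph 0 x : ℂ) ^ 2 / h ^ 2 * u x) + N *
        (Dp 1 (Dp 1 u) x
        - 2 * ((ph 1 x : ℂ) / h) * Dp 1 u x - (HH 1 1 x : ℂ) / h * u x
        + (ph 1 x : ℂ) ^ 2 / h ^ 2 * u x)) +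
        (W x : ℂ) * (N * u x)) = (P * N) * (-(h ^ 2 : ℂ) * ((Dp 0 (Dp 0 u) x
        - 2 * ((ph 0 x : ℂ) / h) * Dp 0 u x - (HH 0 0 x : ℂ) / h * u x
        + (ph 0 x : ℂ) ^ 2 / h ^ 2 * u x) +
        (Dp 1 (Dp 1 u) x
        - 2 * ((ph 1 x : ℂ) / h) * Dp 1 u x - (HH 1 1 x : ℂ) / h * u x
        + (ph 1 x : ℂ) ^ 2 / h ^ 2 * u x)) +
        (W x : ℂ) * u x) := by ring
      rw [this, hE]
      field_simp
      ring
    rw [key, Complex.sq_norm, Complex.normSq_apply]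
    simp only [Complex.add_re, Complex.add_im, Complex.re_ofReal_mul, Complex.im_ofReal_mul,
      Complex.reCLM_apply, Complex.imCLM_apply]
    ring

theorem stmt8 (r₁ r₂ : ℝ) (hr₁ : 0 < r₁) (hr₁₂ : r₁ < r₂) :
    ∃ c > (0 : ℝ), ∃ ε > (0 : ℝ), ∃ h₀ > (0 : ℝ), ∃ C > (0 : ℝ),
      ∀ W : E2 → ℝ, ContDiff ℝ 1 W →
        (∀ x : E2, |W x| ≤ ε) → (∀ x : E2, gradNormR W x ≤ ε) →
        ∀ h : ℝ, 0 < h → h ≤ h₀ →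
          ∀ u : E2 → ℂ, ContDiff ℝ (⊤ : ℕ∞) u → HasCompactSupport u →
            tsupport u ⊆ ball (0 : E2) r₂ \ closedBall (0 : E2) r₁ →
            h * ∫ x : E2, (‖u x‖ ^ 2 + h ^ 2 * gradSq u x) ≤
              C * ∫ x : E2, ‖opPW h (fun y => c * Real.exp ‖y‖) W u x‖ ^ 2 := by
  set M : ℝ := Real.exp r₂ * (1 + 1 / r₁ + 1 / r₁ ^ 2) with hM
  have hr₂ : 0 < r₂ := hr₁.trans hr₁₂
  set m : ℝ := min 1 (1 / r₂) with hm
  have hM0 : 0 < M := by positivity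
  have hm0 : 0 < m := lt_min one_pos (by positivity)
  have hmr : m * r₂ ≤ 1 := by
    have : m ≤ 1 / r₂ := min_le_right _ _
    rwa [le_div_iff₀ hr₂] at this
  refine ⟨1, one_pos, Real.exp (-r₂), Real.exp_pos _, m / M, by positivity, 1 / m, by positivity, ?_⟩
  intro W hW _ hW' h hh hh0 u hu hc hs
  have hhM : h * M ≤ m := by rwa [le_div_iff₀ hM0] at hh0
  have h0 : (0 : E2) ∉ tsupport u := by
    intro h0
    have := (hs h0).2
    simp [hr₁.le] at this
  have hsub : ∀ l : ℂ →L[ℝ] ℝ, tsupport (fun y => l (u y)) ⊆ tsupport u := fun l =>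
    tsupport_sub' (isClosed_tsupport u) fun x hx => by simp [(ev_zero hx).eq_of_nhds]
  have hcl : ∀ l : ℂ →L[ℝ] ℝ, HasCompactSupport (fun y => l (u y)) := fun l =>
    HasCompactSupport.intro hc fun x hx => by simp [(ev_zero hx).eq_of_nhds]
  have hul : ∀ l : ℂ →L[ℝ] ℝ, ContDiff ℝ (⊤ : ℕ∞) (fun y => l (u y)) := fun l =>
    l.contDiff.comp hu
  have est := fun l : ℂ →L[ℝ] ℝ => real_est hr₁ hh hm0 (min_le_left _ _) hmr hM hhM
    (Real.exp_pos (-r₂)).le (by rw [← Real.exp_add]; simp) hW hW' (hul l) (hcl l)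
    ((hsub l).trans hs)
  have e1 := est Complex.reCLM
  have e2 := est Complex.imCLM
  have i1 := lhs_integrable h (hul Complex.reCLM) (hcl Complex.reCLM)
  have i2 := lhs_integrable h (hul Complex.imCLM) (hcl Complex.imCLM)
  have j1 := QQ_integrable h hW (hul Complex.reCLM) (fun hx => h0 (hsub _ hx)) (hcl Complex.reCLM)
  have j2 := QQ_integrable h hW (hul Complex.imCLM) (fun hx => h0 (hsub _ hx)) (hcl Complex.imCLM)
  have hL : ∀ x, ‖u x‖ ^ 2 + h ^ 2 * gradSq u x = 
      (Complex.reCLM (u x) ^ 2 + h ^ 2 * (Dp 0 (fun y => Complex.reCLM (u y)) x ^ 2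
        + Dp 1 (fun y => Complex.reCLM (u y)) x ^ 2)) +
      (Complex.imCLM (u x) ^ 2 + h ^ 2 * (Dp 0 (fun y => Complex.imCLM (u y)) x ^ 2
        + Dp 1 (fun y => Complex.imCLM (u y)) x ^ 2)) := by
    intro x
    simp only [clm_D _ hu]
    simp only [gradSq, Fin.sum_univ_two, Complex.sq_norm, Complex.normSq_apply,
      Complex.reCLM_apply, Complex.imCLM_apply, Dp]
    ring
  simp only [hL, opPW_eq hh W hu h0]
  rw [integral_add i1 i2, integral_add j1 j2, one_div, ← div_eq_inv_mul, le_div_iff₀ hm0]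
  linarith
end
end

section
/- Let R₀ > 0. There exist a positive function φ ∈ C^∞(ℝ², ℝ), and constants ε > 0, h₀ > 0 and C > 0, such that for every W ∈ C¹(ℝ², ℝ) with sup_{B(0,R₀)} |W| ≤ ε and sup_{B(0,R₀)} ‖∇W‖ ≤ ε, every h ∈ (0,h₀], and every u ∈ C_c^∞(B(0,R₀), ℂ): h ∫_{B(0,R₀)} e^{2φ(x)/h} (|u(x)|² + |h∇u(x)|²) dx ≤ C ∫_{B(0,R₀)} e^{2φ(x)/h} |(−h²Δ + W)u(x)|² dx. -/
open MeasureTheory Metric Set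

noncomputable section

/-- The semiclassical Schrödinger operator `(−h²Δ + W)u`. -/
def schrodW (h : ℝ) (W : E2 → ℝ) (u : E2 → ℂ) (x : E2) : ℂ :=
  -(h ^ 2 : ℂ) * lapC u x + (W x : ℂ) * u x

lemma ld_of_diff {f : E2 → ℝ} (hf : Differentiable ℝ f) (x v : E2) :
    HasDerivAt (fun t : ℝ => f (x + t • v)) (fderiv ℝ f x v) 0 :=
  (hf x).hasFDerivAt.hasLineDerivAt v

lemma integral_ld_zero {F D : E2 → ℝ} {v : E2} (hF : Integrable F) (hD : Integrable D)
    (h : ∀ x, HasDerivAt (fun t : ℝ => F (x + t • v)) (D x) 0) : ∫ x, D x = 0 := by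
  have := integral_bilinear_hasLineDerivAt_right_eq_neg_left_of_integrable
    (μ := (volume : Measure E2)) (f := fun _ : E2 => (1 : ℝ)) (f' := fun _ => (0 : ℝ))
    (g := F) (g' := D) (v := v) (B := ContinuousLinearMap.mul ℝ ℝ)
    (by simp) (by simpa using hD) (by simpa using hF)
    (fun x _ => by simpa [HasLineDerivAt] using hasDerivAt_const (0 : ℝ) (1 : ℝ))
    (fun x _ => h x)
  simpa using this

lemma int_of_supp {K : Set E2} (hK : IsCompact K) {f : E2 → ℝ} (hf : Continuous f)
    (h0 : ∀ x, x ∉ K → f x = 0) : Integrable f :=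
  hf.integrable_of_hasCompactSupport (HasCompactSupport.intro hK h0)

lemma alg_ineq (h g W W1 r r1 r2 r11 r12 r22 : ℝ) (h0 : 0 < h) (h1 : h ≤ 1) (hg : 1 ≤ g)
    (hW : |W| ≤ 1) (hW1 : |W1| ≤ 1) :
    h * (r ^ 2 + h ^ 2 * (r1 ^ 2 + r2 ^ 2)) ≤
      4 * (-h ^ 2 * (r11 + r22) + W * r) ^ 2
      - 4 * ((2 * g / h * (2 * h * g * (W - g ^ 2) * r ^ 2
            - h ^ 3 * (2 * g * (r1 + g * r / h) ^ 2 - 2 * g * r2 ^ 2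
              + 5 / 2 * ((r1 + g * r / h) * r)))
          + (2 * h * (W - g ^ 2) * r ^ 2 + 2 * h * g * (W1 - 2 * g) * r ^ 2
            + 2 * h * g * (W - g ^ 2) * (2 * r * r1)
            - h ^ 3 * (2 * (r1 + g * r / h) ^ 2
              + 4 * g * (r1 + g * r / h) * (r11 + (r + g * r1) / h)
              - 2 * r2 ^ 2 - 4 * g * r2 * r12
              + 5 / 2 * ((r11 + (r + g * r1) / h) * r + (r1 + g * r / h) * r1))))
        + (- h ^ 3 * (4 * g * (r22 * (r1 + g * r / h) + r2 * (r12 + g * r2 / h))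
            + 5 / 2 * (r22 * r + r2 * r2)))) := by
  obtain ⟨s, hs⟩ : ∃ s, s = r1 + g * r / h := ⟨_, rfl⟩
  have hr1 : r1 = s - g * r / h := by rw [hs]; ring
  obtain ⟨a, ha⟩ : ∃ a, a = (-h ^ 2 * (r11 + r22) + W * r) - 2 * h * g * s - h * r := ⟨_, rfl⟩
  obtain ⟨b, hb⟩ : ∃ b, b = 2 * h * g * s + h * r := ⟨_, rfl⟩
  have e1 : h ^ 2 * r1 ^ 2 = (h * s - g * r) ^ 2 := by rw [hr1]; field_simp
  have hW' := abs_le.1 hW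
  have hW1' := abs_le.1 hW1
  have key : a ^ 2 + b ^ 2 + 4 * h ^ 3 * s ^ 2 + h * (4 * g ^ 2 - 2 * g * W1) * r ^ 2
      - h / 2 * (a * r - (W - g ^ 2) * r ^ 2) - h * (3 / 4 * g ^ 2 * r ^ 2) ≥ 0 := by
    have k1 : h * (a * r) ≤ h * ((a ^ 2 + r ^ 2) / 2) := by
      apply mul_le_mul_of_nonneg_left _ h0.le
      nlinarith [sq_nonneg (a - r)]
    have k2 : h * a ^ 2 ≤ a ^ 2 := by nlinarith [sq_nonneg a]
    have k3 : 0 ≤ 4 * g ^ 2 - 2 * g * W1 - 1 / 4 + (W - g ^ 2) / 2 - 3 / 4 * g ^ 2 := by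
      nlinarith
    have k4 : 0 ≤ h * r ^ 2 * (4 * g ^ 2 - 2 * g * W1 - 1 / 4 + (W - g ^ 2) / 2 - 3 / 4 * g ^ 2) := by
      positivity
    have k5 : 0 ≤ h ^ 3 * s ^ 2 := by positivity
    nlinarith [sq_nonneg a, sq_nonneg b]
  have k6 : h * (r ^ 2 + h ^ 2 * (r1 ^ 2 + r2 ^ 2)) ≤
      4 * (h * (1 / 2 * h ^ 2 * (s ^ 2 + r2 ^ 2) + 3 / 4 * g ^ 2 * r ^ 2)) := by
    have : r ^ 2 + h ^ 2 * (r1 ^ 2 + r2 ^ 2) ≤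
        4 * (1 / 2 * h ^ 2 * (s ^ 2 + r2 ^ 2) + 3 / 4 * g ^ 2 * r ^ 2) := by
      have : r ^ 2 ≤ g ^ 2 * r ^ 2 := by
        have : 1 ≤ g ^ 2 := by nlinarith
        nlinarith [sq_nonneg r]
      have : 0 ≤ h ^ 2 * r2 ^ 2 := by positivity
      nlinarith [sq_nonneg (h * s + g * r)]
    nlinarith
  refine k6.trans (le_of_sub_nonneg ?_)
  refine (mul_nonneg (by norm_num : (0 : ℝ) ≤ 4) key).trans (le_of_eq ?_)
  rw [ha, hb, hs]
  field_simp
  ring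

lemma real_est_s17 (R₀ h : ℝ) (h0 : 0 < h) (h1 : h ≤ 1) (W : E2 → ℝ)
    (hW : ContDiff ℝ 1 W) (hWb : ∀ x ∈ ball (0 : E2) R₀, |W x| ≤ 1)
    (hWg : ∀ x ∈ ball (0 : E2) R₀, |fderiv ℝ W x (basis2 0)| ≤ 1)
    (r r1 r2 r11 r12 r22 : E2 → ℝ) (K : Set E2) (hK : IsCompact K) (hKb : K ⊆ ball (0 : E2) R₀)
    (cr : Continuous r) (cr1 : Continuous r1) (cr2 : Continuous r2) (cr11 : Continuous r11)
    (cr12 : Continuous r12) (cr22 : Continuous r22)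
    (z : ∀ x, x ∉ K → r x = 0 ∧ r1 x = 0 ∧ r2 x = 0)
    (z' : ∀ x, x ∉ K → r11 x = 0 ∧ r12 x = 0 ∧ r22 x = 0)
    (d1 : ∀ x, HasDerivAt (fun t : ℝ => r (x + t • basis2 0)) (r1 x) 0)
    (d2 : ∀ x, HasDerivAt (fun t : ℝ => r (x + t • basis2 1)) (r2 x) 0)
    (d11 : ∀ x, HasDerivAt (fun t : ℝ => r1 (x + t • basis2 0)) (r11 x) 0)
    (d12 : ∀ x, HasDerivAt (fun t : ℝ => r1 (x + t • basis2 1)) (r12 x) 0)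
    (d21 : ∀ x, HasDerivAt (fun t : ℝ => r2 (x + t • basis2 0)) (r12 x) 0)
    (d22 : ∀ x, HasDerivAt (fun t : ℝ => r2 (x + t • basis2 1)) (r22 x) 0) :
    h * ∫ x : E2, Real.exp (2 * ((x 0 + (R₀ + 1)) ^ 2 / 2 + 1) / h) *
        (r x ^ 2 + h ^ 2 * (r1 x ^ 2 + r2 x ^ 2)) ≤
      4 * ∫ x : E2, Real.exp (2 * ((x 0 + (R₀ + 1)) ^ 2 / 2 + 1) / h) *
        (-h ^ 2 * (r11 x + r22 x) + W x * r x) ^ 2 := by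
  have hne : h ≠ 0 := h0.ne'
  let g : E2 → ℝ := fun x => x 0 + (R₀ + 1)
  let w : E2 → ℝ := fun x => Real.exp (2 * ((x 0 + (R₀ + 1)) ^ 2 / 2 + 1) / h)
  let W1 : E2 → ℝ := fun x => fderiv ℝ W x (basis2 0)
  have cW : Continuous W := hW.continuous
  have cW1 : Continuous W1 := (hW.continuous_fderiv (by norm_num)).clm_apply continuous_const
  have cg : Continuous g := by fun_prop
  have cw : Continuous w := by fun_prop
  have dg1 : ∀ x, HasDerivAt (fun t : ℝ => g (x + t • basis2 0)) 1 0 := by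
    intro x
    have : (fun t : ℝ => g (x + t • basis2 0)) = fun t => t + (x 0 + (R₀ + 1)) := by
      funext t; simp [g, basis2]; ring
    rw [this]
    exact (hasDerivAt_id (0 : ℝ)).add_const _
  have dg2 : ∀ x, HasDerivAt (fun t : ℝ => g (x + t • basis2 1)) 0 0 := by
    intro x
    have : (fun t : ℝ => g (x + t • basis2 1)) = fun t => (x 0 + (R₀ + 1)) := by
      funext t; simp [g, basis2]
    rw [this]
    exact hasDerivAt_const _ _
  have hw : ∀ x, w x = Real.exp (2 * (g x ^ 2 / 2 + 1) / h) := fun x => rfl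
  have dw1 : ∀ x, HasDerivAt (fun t : ℝ => w (x + t • basis2 0)) (w x * (2 * g x / h)) 0 := by
    intro x
    have := ((((((dg1 x).pow 2).div_const 2).add_const 1).const_mul 2).div_const h).exp
    refine this.congr_deriv ?_
    simp [hw]
  have dw2 : ∀ x, HasDerivAt (fun t : ℝ => w (x + t • basis2 1)) 0 0 := by
    intro x
    have := ((((((dg2 x).pow 2).div_const 2).add_const 1).const_mul 2).div_const h).exp
    refine this.congr_deriv ?_
    simp
  have dW1 : ∀ x, HasDerivAt (fun t : ℝ => W (x + t • basis2 0)) (W1 x) 0 := fun x =>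
    ld_of_diff (hW.differentiable (by norm_num)) x _
  let F1 : E2 → ℝ := fun x => w x * (2 * h * g x * (W x - g x ^ 2) * r x ^ 2
            - h ^ 3 * (2 * g x * (r1 x + g x * r x / h) ^ 2 - 2 * g x * r2 x ^ 2
              + 5 / 2 * ((r1 x + g x * r x / h) * r x)))
  let F2 : E2 → ℝ := fun x => w x * (- h ^ 3 * (4 * g x * (r2 x * (r1 x + g x * r x / h))
      + 5 / 2 * (r2 x * r x)))
  let D1 : E2 → ℝ := fun x => w x * (2 * g x / h * (2 * h * g x * (W x - g x ^ 2) * r x ^ 2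
            - h ^ 3 * (2 * g x * (r1 x + g x * r x / h) ^ 2 - 2 * g x * r2 x ^ 2
              + 5 / 2 * ((r1 x + g x * r x / h) * r x)))
          + (2 * h * (W x - g x ^ 2) * r x ^ 2 + 2 * h * g x * (W1 x - 2 * g x) * r x ^ 2
            + 2 * h * g x * (W x - g x ^ 2) * (2 * r x * r1 x)
            - h ^ 3 * (2 * (r1 x + g x * r x / h) ^ 2
              + 4 * g x * (r1 x + g x * r x / h) * (r11 x + (r x + g x * r1 x) / h)
              - 2 * r2 x ^ 2 - 4 * g x * r2 x * r12 x
              + 5 / 2 * ((r11 x + (r x + g x * r1 x) / h) * r x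
                + (r1 x + g x * r x / h) * r1 x))))
  let D2 : E2 → ℝ := fun x => w x *
    (- h ^ 3 * (4 * g x * (r22 x * (r1 x + g x * r x / h) + r2 x * (r12 x + g x * r2 x / h))
            + 5 / 2 * (r22 x * r x + r2 x * r2 x)))
  let L : E2 → ℝ := fun x => w x * (r x ^ 2 + h ^ 2 * (r1 x ^ 2 + r2 x ^ 2))
  let Q : E2 → ℝ := fun x => w x * (-h ^ 2 * (r11 x + r22 x) + W x * r x) ^ 2
  have iF1 : Integrable F1 := int_of_supp hK (by fun_prop) fun x hx => by
    obtain ⟨a, b, c⟩ := z x hx; simp [F1, a, b, c]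
  have iF2 : Integrable F2 := int_of_supp hK (by fun_prop) fun x hx => by
    obtain ⟨a, b, c⟩ := z x hx; simp [F2, a, b, c]
  have zD1 : ∀ x, x ∉ K → D1 x = 0 := fun x hx => by
    obtain ⟨a, b, c⟩ := z x hx; obtain ⟨a', b', c'⟩ := z' x hx; simp [D1, a, b, c, a', b']
  have zD2 : ∀ x, x ∉ K → D2 x = 0 := fun x hx => by
    obtain ⟨a, b, c⟩ := z x hx; obtain ⟨a', b', c'⟩ := z' x hx; simp [D2, a, b, c, b', c']
  have zL : ∀ x, x ∉ K → L x = 0 := fun x hx => by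
    obtain ⟨a, b, c⟩ := z x hx; simp [L, a, b, c]
  have zQ : ∀ x, x ∉ K → Q x = 0 := fun x hx => by
    obtain ⟨a, b, c⟩ := z x hx; obtain ⟨a', b', c'⟩ := z' x hx; simp [Q, a, a', c']
  have iD1 : Integrable D1 := int_of_supp hK (by fun_prop) zD1
  have iD2 : Integrable D2 := int_of_supp hK (by fun_prop) zD2
  have iL : Integrable L := int_of_supp hK (by fun_prop) zL
  have iQ : Integrable Q := int_of_supp hK (by fun_prop) zQ
  have I1 : ∫ x, D1 x = 0 := by
    refine integral_ld_zero iF1 iD1 (v := basis2 0) fun x => ?_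
    have ds := (d11 x).add (((dg1 x).mul (d1 x)).div_const h)
    have := (dw1 x).mul (((((dg1 x).const_mul (2 * h)).mul ((dW1 x).sub ((dg1 x).pow 2))).mul
      ((d1 x).pow 2)).sub (((((((dg1 x).const_mul 2).mul (ds.pow 2)).sub
        (((dg1 x).const_mul 2).mul ((d21 x).pow 2))).add ((ds.mul (d1 x)).const_mul (5 / 2)))).const_mul (h ^ 3)))
    refine this.congr_deriv ?_
    simp [D1]
    ring
  have I2 : ∫ x, D2 x = 0 := by
    refine integral_ld_zero iF2 iD2 (v := basis2 1) fun x => ?_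
    have ds := (d12 x).add (((dg2 x).mul (d2 x)).div_const h)
    have := (dw2 x).mul (((((dg2 x).const_mul 4).mul ((d22 x).mul ds)).add
      (((d22 x).mul (d2 x)).const_mul (5 / 2))).const_mul (-h ^ 3))
    refine this.congr_deriv ?_
    simp [D2]
  have P : ∀ x, h * L x ≤ 4 * Q x - 4 * (D1 x + D2 x) := by
    intro x
    by_cases hx : x ∈ K
    · have hb := hKb hx
      have hg : 1 ≤ g x := by
        have : ‖x 0‖ ≤ ‖x‖ := PiLp.norm_apply_le x 0
        have h2 : ‖x‖ < R₀ := by simpa using hb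
        have := neg_abs_le (x 0)
        simp only [Real.norm_eq_abs] at *
        simp only [g]; linarith
      have := mul_le_mul_of_nonneg_left (alg_ineq h (g x) (W x) (W1 x) (r x) (r1 x) (r2 x) (r11 x)
        (r12 x) (r22 x) h0 h1 hg (hWb x hb) (hWg x hb)) (Real.exp_pos _ : 0 < w x).le
      refine le_trans (le_of_eq ?_) (this.trans (le_of_eq ?_))
      · simp only [L]; ring
      · simp only [Q, D1, D2]; ring
    · rw [zL x hx, zQ x hx, zD1 x hx, zD2 x hx]; simp
  have := integral_mono (iL.const_mul h) ((iQ.const_mul 4).sub ((iD1.add iD2).const_mul 4)) P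
  rw [integral_const_mul] at this
  refine this.trans (le_of_eq ?_)
  have e := integral_sub (iQ.const_mul 4) ((iD1.add iD2).const_mul 4)
  simp only [Pi.add_apply] at e
  simp only [Pi.sub_apply, Pi.add_apply]
  rw [e, integral_const_mul, integral_const_mul, integral_add iD1 iD2, I1, I2]
  simp [Q, w]

lemma comp_est (R₀ h : ℝ) (h0 : 0 < h) (h1 : h ≤ 1) (W : E2 → ℝ)
    (hW : ContDiff ℝ 1 W) (hWb : ∀ x ∈ ball (0 : E2) R₀, |W x| ≤ 1)
    (hWg : ∀ x ∈ ball (0 : E2) R₀, |fderiv ℝ W x (basis2 0)| ≤ 1)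
    (u : E2 → ℂ) (hu : ContDiff ℝ (⊤ : ℕ∞) u) (hc : HasCompactSupport u)
    (hs : tsupport u ⊆ ball (0 : E2) R₀) (l : ℂ →L[ℝ] ℝ) :
    h * ∫ x : E2, Real.exp (2 * ((x 0 + (R₀ + 1)) ^ 2 / 2 + 1) / h) *
        (l (u x) ^ 2 + h ^ 2 * (l (fderiv ℝ u x (basis2 0)) ^ 2
          + l (fderiv ℝ u x (basis2 1)) ^ 2)) ≤
      4 * ∫ x : E2, Real.exp (2 * ((x 0 + (R₀ + 1)) ^ 2 / 2 + 1) / h) *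
        (-h ^ 2 * (l (fderiv ℝ (fun y => fderiv ℝ u y (basis2 0)) x (basis2 0))
          + l (fderiv ℝ (fun y => fderiv ℝ u y (basis2 1)) x (basis2 1))) + W x * l (u x)) ^ 2 := by
  have hv : ∀ v : E2, ContDiff ℝ (⊤ : ℕ∞) (fun y => fderiv ℝ u y v) := fun v =>
    (hu.fderiv_right (m := (⊤ : ℕ∞)) (by simp)).clm_apply contDiff_const
  have hvv : ∀ v v' : E2, Continuous (fun x => fderiv ℝ (fun y => fderiv ℝ u y v) x v') :=
    fun v v' => (((hv v).fderiv_right (m := (⊤ : ℕ∞)) (by simp)).clm_apply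
      contDiff_const).continuous
  have ld : ∀ (f : E2 → ℂ) (v x : E2), ContDiff ℝ (⊤ : ℕ∞) f →
      HasDerivAt (fun t : ℝ => l (f (x + t • v))) (l (fderiv ℝ f x v)) 0 := by
    intro f v x hf
    exact l.hasFDerivAt.comp_hasDerivAt (0 : ℝ)
      (((hf.differentiable (by simp)) x).hasFDerivAt.hasLineDerivAt v)
  have sym : ∀ x, fderiv ℝ (fun y => fderiv ℝ u y (basis2 1)) x (basis2 0)
      = fderiv ℝ (fun y => fderiv ℝ u y (basis2 0)) x (basis2 1) := by
    intro x
    have hd : DifferentiableAt ℝ (fderiv ℝ u) x :=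
      ((hu.fderiv_right (m := (⊤ : ℕ∞)) (by simp)).differentiable (by simp)) x
    have hsym : IsSymmSndFDerivAt ℝ u x := hu.contDiffAt.isSymmSndFDerivAt (by
      simp only [minSmoothness_of_isRCLikeNormedField]; exact WithTop.coe_le_coe.2 (le_top : (2 : ℕ∞) ≤ ⊤))
    rw [fderiv_clm_apply hd (by fun_prop), fderiv_clm_apply hd (by fun_prop)]
    simpa using hsym _ _
  have z0 : ∀ x, x ∉ tsupport u → u x = 0 := fun x hx => image_eq_zero_of_notMem_tsupport hx
  have z1 : ∀ v x, x ∉ tsupport u → fderiv ℝ u x v = 0 := fun v x hx => by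
    rw [fderiv_of_notMem_tsupport (𝕜 := ℝ) hx]; rfl
  have z2 : ∀ v v' x, x ∉ tsupport u → fderiv ℝ (fun y => fderiv ℝ u y v) x v' = 0 :=
    fun v v' x hx => by
      have : x ∉ tsupport (fun y => fderiv ℝ u y v) := fun hx' =>
        hx (closure_minimal (fun y hy => by
          by_contra hy'
          exact hy (z1 v y hy')) (isClosed_tsupport u) hx')
      rw [fderiv_of_notMem_tsupport (𝕜 := ℝ) this]; rfl
  refine real_est_s17 R₀ h h0 h1 W hW hWb hWg (fun x => l (u x)) (fun x => l (fderiv ℝ u x (basis2 0)))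
    (fun x => l (fderiv ℝ u x (basis2 1)))
    (fun x => l (fderiv ℝ (fun y => fderiv ℝ u y (basis2 0)) x (basis2 0)))
    (fun x => l (fderiv ℝ (fun y => fderiv ℝ u y (basis2 0)) x (basis2 1)))
    (fun x => l (fderiv ℝ (fun y => fderiv ℝ u y (basis2 1)) x (basis2 1)))
    (tsupport u) hc hs (l.continuous.comp hu.continuous) (l.continuous.comp (hv _).continuous)
    (l.continuous.comp (hv _).continuous) (l.continuous.comp (hvv _ _))
    (l.continuous.comp (hvv _ _)) (l.continuous.comp (hvv _ _)) ?_ ?_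
    (fun x => ld u _ x hu) (fun x => ld u _ x hu) (fun x => ld _ _ x (hv _))
    (fun x => ld _ _ x (hv _)) (fun x => ?_) (fun x => ld _ _ x (hv _))
  · intro x hx
    simp [z0 x hx, z1 _ x hx]
  · intro x hx
    simp [z2 _ _ x hx]
  · rw [← sym x]
    exact ld _ _ x (hv _)

theorem stmt17 (R₀ : ℝ) (hR₀ : 0 < R₀) :
    ∃ φ : E2 → ℝ, ContDiff ℝ (⊤ : ℕ∞) φ ∧ (∀ x, 0 < φ x) ∧
      ∃ ε > (0 : ℝ), ∃ h₀ > (0 : ℝ), ∃ C > (0 : ℝ),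
        ∀ W : E2 → ℝ, ContDiff ℝ 1 W →
          (∀ x ∈ ball (0 : E2) R₀, |W x| ≤ ε) →
          (∀ x ∈ ball (0 : E2) R₀, gradNormR W x ≤ ε) →
          ∀ h : ℝ, 0 < h → h ≤ h₀ →
            ∀ u : E2 → ℂ, ContDiff ℝ (⊤ : ℕ∞) u → HasCompactSupport u →
              tsupport u ⊆ ball (0 : E2) R₀ →
              h * ∫ x in ball (0 : E2) R₀,
                  Real.exp (2 * φ x / h) * (‖u x‖ ^ 2 + h ^ 2 * gradSq u x) ≤
                C * ∫ x in ball (0 : E2) R₀,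
                  Real.exp (2 * φ x / h) * ‖schrodW h W u x‖ ^ 2 := by
  refine ⟨fun x => (x 0 + (R₀ + 1)) ^ 2 / 2 + 1, by fun_prop, fun x => by positivity,
    1, one_pos, 1, one_pos, 4, by norm_num, ?_⟩
  intro W hW hWb hWg h h0 h1 u hu hc hs
  have hWg' : ∀ x ∈ ball (0 : E2) R₀, |fderiv ℝ W x (basis2 0)| ≤ 1 := by
    intro x hx
    refine le_trans ?_ (hWg x hx)
    refine Real.abs_le_sqrt ?_
    rw [Fin.sum_univ_two]
    nlinarith [sq_nonneg (fderiv ℝ W x (basis2 1))]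
  have A := comp_est R₀ h h0 h1 W hW hWb hWg' u hu hc hs Complex.reCLM
  have B := comp_est R₀ h h0 h1 W hW hWb hWg' u hu hc hs Complex.imCLM
  have hv : ∀ v : E2, ContDiff ℝ (⊤ : ℕ∞) (fun y => fderiv ℝ u y v) := fun v =>
    (hu.fderiv_right (m := (⊤ : ℕ∞)) (by simp)).clm_apply contDiff_const
  have hvv : ∀ v v' : E2, Continuous (fun x => fderiv ℝ (fun y => fderiv ℝ u y v) x v') :=
    fun v v' => (((hv v).fderiv_right (m := (⊤ : ℕ∞)) (by simp)).clm_apply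
      contDiff_const).continuous
  have z0 : ∀ x, x ∉ tsupport u → u x = 0 := fun x hx => image_eq_zero_of_notMem_tsupport hx
  have z1 : ∀ v x, x ∉ tsupport u → fderiv ℝ u x v = 0 := fun v x hx => by
    rw [fderiv_of_notMem_tsupport (𝕜 := ℝ) hx]; rfl
  have z2 : ∀ v v' x, x ∉ tsupport u → fderiv ℝ (fun y => fderiv ℝ u y v) x v' = 0 :=
    fun v v' x hx => by
      have : x ∉ tsupport (fun y => fderiv ℝ u y v) := fun hx' =>
        hx (closure_minimal (fun y hy => by
          by_contra hy'
          exact hy (z1 v y hy')) (isClosed_tsupport u) hx')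
      rw [fderiv_of_notMem_tsupport (𝕜 := ℝ) this]; rfl
  have cu := hu.continuous
  have cW := hW.continuous
  have c1 := fun v => (hv v).continuous
  have iL : ∀ l : ℂ →L[ℝ] ℝ, Integrable (fun x : E2 =>
      Real.exp (2 * ((x 0 + (R₀ + 1)) ^ 2 / 2 + 1) / h) *
        (l (u x) ^ 2 + h ^ 2 * (l (fderiv ℝ u x (basis2 0)) ^ 2
          + l (fderiv ℝ u x (basis2 1)) ^ 2))) := fun l =>
    int_of_supp hc (by
      have := l.continuous.comp cu
      have := l.continuous.comp (c1 (basis2 0))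
      have := l.continuous.comp (c1 (basis2 1))
      simp only [Function.comp_def] at *
      fun_prop) fun x hx => by simp [z0 x hx, z1 _ x hx]
  have iQ : ∀ l : ℂ →L[ℝ] ℝ, Integrable (fun x : E2 =>
      Real.exp (2 * ((x 0 + (R₀ + 1)) ^ 2 / 2 + 1) / h) *
        (-h ^ 2 * (l (fderiv ℝ (fun y => fderiv ℝ u y (basis2 0)) x (basis2 0))
          + l (fderiv ℝ (fun y => fderiv ℝ u y (basis2 1)) x (basis2 1)))
          + W x * l (u x)) ^ 2) := fun l =>
    int_of_supp hc (by
      have := l.continuous.comp cu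
      have := l.continuous.comp (hvv (basis2 0) (basis2 0))
      have := l.continuous.comp (hvv (basis2 1) (basis2 1))
      simp only [Function.comp_def] at *
      fun_prop) fun x hx => by simp [z0 x hx, z2 _ _ x hx]
  have AB := add_le_add A B
  rw [← mul_add, ← mul_add, ← integral_add (iL _) (iL _), ← integral_add (iQ _) (iQ _)] at AB
  rw [setIntegral_eq_integral_of_forall_compl_eq_zero,
    setIntegral_eq_integral_of_forall_compl_eq_zero]
  · refine le_trans (le_of_eq ?_) (AB.trans (le_of_eq ?_))
    · congr 2
      funext x
      simp only [gradSq, Fin.sum_univ_two, Complex.sq_norm, Complex.normSq_apply,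
        Complex.reCLM_apply, Complex.imCLM_apply]
      ring
    · congr 2
      funext x
      simp only [schrodW, lapC, Fin.sum_univ_two, Complex.sq_norm, Complex.normSq_apply,
        Complex.reCLM_apply, Complex.imCLM_apply]
      simp [← Complex.ofReal_pow]
      ring
  · intro x hx
    have hx' : x ∉ tsupport u := fun h' => hx (hs h')
    simp [schrodW, lapC, z0 x hx', z2 _ _ x hx']
  · intro x hx
    have hx' : x ∉ tsupport u := fun h' => hx (hs h')
    simp [gradSq, z0 x hx', z1 _ x hx']
end
end
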